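/- Let M > M₁(Ω₁) and let u^ε be the strictly k-convex solution of problem (2.1). Then there exists a constant C > 1, depending on Ω₁, M and ε₀ but not on ε, such that at every point p ∈ ∂Ω₁, with ν the unit inward normal of ∂Ω₁ at p, one has C·(Dψ(p)·ν) < Du^ε(p)·ν < Dψ(p)·ν, where ψ is the strictly k-convex solution of σ_k(D²ψ) = 1 in Ω₁ with ψ = 0 on ∂Ω₁. -/

import Mathlib

open Set Metric Filter Topology Bornology
open scoped RealInnerProductSpace

noncomputable section

/-- Euclidean `n`-space. -/
abbrev Euc (n : ℕ) := EuclideanSpace ℝ (Fin n)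

/-- The `k`-th elementary symmetric polynomial of a vector `lam ∈ ℝⁿ`. -/
def esymmVec {n : ℕ} (k : ℕ) (lam : Fin n → ℝ) : ℝ :=
  ∑ S ∈ Finset.powersetCard k (Finset.univ : Finset (Fin n)), ∏ i ∈ S, lam i

/-- `σ_k(A)`: the `k`-th elementary symmetric polynomial of the eigenvalues of a
symmetric matrix `A` (junk value `0` if `A` is not symmetric). -/
noncomputable def sigmaMat {n : ℕ} (k : ℕ) (A : Matrix (Fin n) (Fin n) ℝ) : ℝ := by
  classical exact if h : A.IsHermitian then esymmVec k h.eigenvalues else 0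

/-- The eigenvalues of the symmetric matrix `A` lie in the Gårding cone
`Γ_k = {λ : σ_j(λ) > 0, j = 1, …, k}`. -/
def InGardingCone {n : ℕ} (k : ℕ) (A : Matrix (Fin n) (Fin n) ℝ) : Prop :=
  ∃ h : A.IsHermitian, ∀ j : ℕ, 1 ≤ j → j ≤ k → 0 < esymmVec j h.eigenvalues

/-- The Hessian matrix of `u` at `x`, with derivatives taken within the set `s`. -/
noncomputable def hessianWithin {n : ℕ} (u : Euc n → ℝ) (s : Set (Euc n)) (x : Euc n) :
    Matrix (Fin n) (Fin n) ℝ :=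
  fun i j => iteratedFDerivWithin ℝ 2 u s x
    ![EuclideanSpace.single i (1:ℝ), EuclideanSpace.single j (1:ℝ)]

/-- The Hessian matrix `D²u(x)` of `u` at `x`. -/
noncomputable def hessian {n : ℕ} (u : Euc n → ℝ) (x : Euc n) : Matrix (Fin n) (Fin n) ℝ :=
  fun i j => iteratedFDeriv ℝ 2 u x
    ![EuclideanSpace.single i (1:ℝ), EuclideanSpace.single j (1:ℝ)]

/-- Operator norm of the Hessian matrix of `u` at `x` (derivatives within `s`). -/
noncomputable def hessOpNormWithin {n : ℕ} (u : Euc n → ℝ) (s : Set (Euc n)) (x : Euc n) : ℝ :=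
  ‖Matrix.toEuclideanCLM (𝕜 := ℝ) (hessianWithin u s x)‖

/-- A set has smooth boundary: it is the sublevel set of a smooth defining function
with nonvanishing differential on the boundary. -/
def HasSmoothBoundary {n : ℕ} (Ω : Set (Euc n)) : Prop :=
  ∃ ρ : Euc n → ℝ, ContDiff ℝ (⊤ : ℕ∞) ρ ∧ Ω = {x | ρ x < 0} ∧
    ∀ x ∈ frontier Ω, fderiv ℝ ρ x ≠ 0

/-- `c_{n,k} = (C(n,k))^{1/k}` where `C(n,k)` is the binomial coefficient. -/
noncomputable def cnk (n k : ℕ) : ℝ := (n.choose k : ℝ) ^ ((1:ℝ)/(k:ℝ))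

/-- The radially symmetric subsolution `|x - x₀|²/(2c_{n,k}) − ε²/(2c_{n,k}) − M`. -/
noncomputable def underSol {n : ℕ} (k : ℕ) (x₀ : Euc n) (ε M : ℝ) (x : Euc n) : ℝ :=
  ‖x - x₀‖^2 / (2 * cnk n k) - ε^2 / (2 * cnk n k) - M

/-- The closed ring `Ω̄^ε = closure (Ω₁ \ B̄_ε(x₀))`. -/
def ringSet {n : ℕ} (Ω₁ : Set (Euc n)) (x₀ : Euc n) (ε : ℝ) : Set (Euc n) :=
  closure (Ω₁ \ closedBall x₀ ε)

/-- `u` is a strictly `k`-convex solution of problem (2.1):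
`σ_k(D²u) = 1` in `Ω^ε = Ω₁ \ B̄_ε(x₀)`, `u = 0` on `∂Ω₁`, `u = −M` on `∂B_ε(x₀)`,
with `u ∈ C²(Ω̄^ε)`. -/
def IsSol {n : ℕ} (k : ℕ) (Ω₁ : Set (Euc n)) (x₀ : Euc n) (ε M : ℝ) (u : Euc n → ℝ) : Prop :=
  ContDiffOn ℝ 2 u (ringSet Ω₁ x₀ ε) ∧
  (∀ x ∈ Ω₁ \ closedBall x₀ ε,
      InGardingCone k (hessianWithin u (ringSet Ω₁ x₀ ε) x) ∧
      sigmaMat k (hessianWithin u (ringSet Ω₁ x₀ ε) x) = 1) ∧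
  (∀ x ∈ frontier Ω₁, u x = 0) ∧
  (∀ x ∈ sphere x₀ ε, u x = -M)

/-- `ψ` is a strictly `k`-convex solution of problem (2.2):
`σ_k(D²ψ) = 1` in `Ω₁`, `ψ = 0` on `∂Ω₁`, with `ψ ∈ C^∞(Ω̄₁)`. -/
def IsSol22 {n : ℕ} (k : ℕ) (Ω₁ : Set (Euc n)) (ψ : Euc n → ℝ) : Prop :=
  ContDiffOn ℝ (⊤ : ℕ∞) ψ (closure Ω₁) ∧
  (∀ x ∈ Ω₁, InGardingCone k (hessianWithin ψ (closure Ω₁) x) ∧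
      sigmaMat k (hessianWithin ψ (closure Ω₁) x) = 1) ∧
  (∀ x ∈ frontier Ω₁, ψ x = 0)

/-- `u` is a strictly `k`-convex solution of the Dirichlet problem on the convex ring
`Ω = Ω₁ \ Ω̄₂`: `σ_k(D²u) = 1` in `Ω`, `u = 0` on `∂Ω₁`, `u = −M` on `∂Ω₂`,
with `u ∈ C²(Ω̄)`. -/
def IsSolRing {n : ℕ} (k : ℕ) (Ω₁ Ω₂ : Set (Euc n)) (M : ℝ) (u : Euc n → ℝ) : Prop :=
  ContDiffOn ℝ 2 u (closure (Ω₁ \ closure Ω₂)) ∧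
  (∀ x ∈ Ω₁ \ closure Ω₂,
      InGardingCone k (hessianWithin u (closure (Ω₁ \ closure Ω₂)) x) ∧
      sigmaMat k (hessianWithin u (closure (Ω₁ \ closure Ω₂)) x) = 1) ∧
  (∀ x ∈ frontier Ω₁, u x = 0) ∧
  (∀ x ∈ frontier Ω₂, u x = -M)

/-- The extension `ũ` of `u`, equal to `−M` on the closed ball `B̄_ε(x₀)`. -/
noncomputable def extendBy {n : ℕ} (u : Euc n → ℝ) (x₀ : Euc n) (ε M : ℝ) (x : Euc n) : ℝ := by
  classical exact if x ∈ closedBall x₀ ε then -M else u x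

/-- The extension `ũ` of `u`, equal to `−M` on the set `Ω₂`. -/
noncomputable def extendOn {n : ℕ} (u : Euc n → ℝ) (Ω₂ : Set (Euc n)) (M : ℝ) (x : Euc n) : ℝ := by
  classical exact if x ∈ Ω₂ then -M else u x

/-- The quadratic polynomial with Hessian `A`, linear part `b` and constant term `c`. -/
noncomputable def quadPoly {n : ℕ} (A : Matrix (Fin n) (Fin n) ℝ) (b : Euc n) (c : ℝ)
    (x : Euc n) : ℝ :=
  (∑ i, ∑ j, A i j * x i * x j) / 2 + ⟪b, x⟫ + c

/-!
Let `v` be a `C²` function with `σ_k(D²v) ≤ σ_k(D²u)`, where `u` is strictly `k`-convex. At an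
interior maximum of `c u - v`, `c > 1`, one has `c D²u ≤ D²v`, which contradicts the monotonicity of
`σ_k` on the Gårding cone `Γ_k` (Newton's and Weyl's inequalities); letting `c → 1` gives the
comparison principle. Comparing on the ring, `u ≤ ψ`, because `-M < ψ` on the inner sphere. As `ψ`
is negative in `Ω₁`, some `C > 1` makes `C ψ ≤ -M` on the whole of `B̄_{ε₀}`; then `C ψ ≤ u` for
every `ε`, and `C + 1` gives the strict lower bound.

The strict upper bound is a Hopf lemma. A matrix in `Γ_k` has `σ_k` strictly increasing along every
rank-one positive direction, so a barrier whose Hessian is large in the normal direction can be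
added to `u` inside a ball touching the boundary without creating an interior maximum of the
difference with `v`. Applied at an interior contact point it yields `u < ψ` in the ring, and applied
at `p ∈ ∂Ω₁` it separates the normal derivatives; there it needs only the Hessian of `ψ` up to the
boundary, whose limit stays in `Γ_k` because `σ_k(D²ψ) = 1`.
-/

section NewtonInequality

open Polynomial

theorem splits_derivative {p : ℝ[X]} (hp : p.Splits) : (derivative p).Splits := by
  rw [splits_iff_card_roots] at hp ⊢
  have rolle := card_roots_le_derivative p
  have upper := card_roots' (derivative p)
  have degree := natDegree_derivative_le p
  by_cases h : p.natDegree = 0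
  · obtain ⟨c, rfl⟩ := natDegree_eq_zero.1 h
    simp
  · omega

theorem splits_iterate_derivative {p : ℝ[X]} (hp : p.Splits) (m : ℕ) :
    (derivative^[m] p).Splits := by
  induction m with
  | zero => exact hp
  | succ m ih => rw [Function.iterate_succ_apply']; exact splits_derivative ih

theorem eval_prod_X_sub_C_mul_eval_derivative_two_le_sq (s : Multiset ℝ) (x : ℝ) :
    (s.map (X - C ·)).prod.eval x *
        (derivative (derivative (s.map (X - C ·)).prod)).eval x ≤
      ((derivative (s.map (X - C ·)).prod).eval x) ^ 2 := by
  induction s using Multiset.induction_on with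
  | empty => simp
  | cons r s ih =>
    rw [Multiset.map_cons, Multiset.prod_cons]
    generalize (s.map (X - C ·)).prod = f at ih ⊢
    simp only [derivative_mul, derivative_sub, derivative_X, derivative_C, derivative_add,
      eval_mul, eval_add, eval_sub, eval_X, eval_C, sub_zero, one_mul]
    nlinarith [mul_le_mul_of_nonneg_left ih (sq_nonneg (x - r)), sq_nonneg (f.eval x)]

theorem eval_mul_eval_derivative_two_le_sq {p : ℝ[X]} (hp : p.Splits) (x : ℝ) :
    p.eval x * (derivative (derivative p)).eval x ≤ ((derivative p).eval x) ^ 2 := by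
  rw [hp.eq_prod_roots]
  simp only [derivative_C_mul, eval_C_mul]
  linarith [mul_le_mul_of_nonneg_left
    (eval_prod_X_sub_C_mul_eval_derivative_two_le_sq p.roots x) (sq_nonneg p.leadingCoeff)]

theorem coeff_mul_coeff_add_two_le_sq {p : ℝ[X]} (hp : p.Splits) (m : ℕ) :
    p.coeff m * p.coeff (m + 2) ≤ p.coeff (m + 1) ^ 2 := by
  rcases le_or_gt (p.coeff m * p.coeff (m + 2)) 0 with hneg | hpos
  · exact hneg.trans (sq_nonneg _)
  have coeff_eq (j : ℕ) : (derivative^[j] p).eval 0 = j.factorial * p.coeff j := by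
    rw [← coeff_zero_eq_eval_zero, coeff_iterate_derivative, zero_add, Nat.descFactorial_self,
      nsmul_eq_mul]
  have h := eval_mul_eval_derivative_two_le_sq (splits_iterate_derivative hp m) 0
  rw [← Function.iterate_succ_apply' derivative, ← Function.iterate_succ_apply' derivative,
    coeff_eq, coeff_eq, coeff_eq, Nat.factorial_succ (m + 1), Nat.factorial_succ m] at h
  push_cast at h
  have hm : (0 : ℝ) < m + 1 := by positivity
  have hfac : (0 : ℝ) < (m.factorial : ℝ) ^ 2 * (m + 1) := by positivity
  have hweighted : (m + 2) * (p.coeff m * p.coeff (m + 2)) ≤ (m + 1) * p.coeff (m + 1) ^ 2 :=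
    le_of_mul_le_mul_left (by linarith) hfac
  exact le_of_mul_le_mul_left (by linarith) hm

theorem esymm_mul_esymm_add_two_le_sq (s : Multiset ℝ) (k : ℕ) :
    s.esymm k * s.esymm (k + 2) ≤ s.esymm (k + 1) ^ 2 := by
  rcases lt_or_ge s.card (k + 2) with hlt | hle
  · have hzero : s.esymm (k + 2) = 0 := by
      simp [Multiset.esymm, Multiset.powersetCard_eq_empty _ hlt]
    rw [hzero, mul_zero]
    positivity
  · have hsplits : (s.map fun r ↦ X + C r).prod.Splits :=
      Splits.multisetProd (by simp +contextual [Splits.X_add_C])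
    obtain ⟨m, hm⟩ := Nat.exists_eq_add_of_le hle
    have h := coeff_mul_coeff_add_two_le_sq hsplits m
    rw [Multiset.prod_X_add_C_coeff _ (by omega), Multiset.prod_X_add_C_coeff _ (by omega),
      Multiset.prod_X_add_C_coeff _ (by omega), show s.card - m = k + 2 by omega,
      show s.card - (m + 2) = k by omega, show s.card - (m + 1) = k + 1 by omega] at h
    linarith

end NewtonInequality

section GardingCone

theorem esymm_cons (a : ℝ) (s : Multiset ℝ) (k : ℕ) :
    (a ::ₘ s).esymm (k + 1) = s.esymm (k + 1) + a * s.esymm k := by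
  simp only [Multiset.esymm, Multiset.powersetCard_cons, Multiset.map_add, Multiset.sum_add,
    Multiset.map_map, Function.comp_apply, Multiset.prod_cons, Multiset.sum_map_mul_left]

/-- The Gårding cone `Γ_k`, as a set of multisets of real numbers. Since `σ₀ = 1`, letting `j`
start from `0` does not change it. -/
def gardingCone (k : ℕ) : Set (Multiset ℝ) :=
  {s | ∀ j ≤ k, 0 < s.esymm j}

theorem mem_gardingCone_of_cons {a : ℝ} {s : Multiset ℝ} {k : ℕ}
    (h : a ::ₘ s ∈ gardingCone (k + 1)) : s ∈ gardingCone k := by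
  intro j
  induction j with
  | zero => simp [Multiset.esymm]
  | succ j ih =>
    intro hj
    have hpos := ih (by omega)
    have hone := h (j + 1) (by omega)
    have htwo := h (j + 2) (by omega)
    rw [esymm_cons] at hone htwo
    have hnewton := esymm_mul_esymm_add_two_le_sq s j
    by_contra! hnonpos
    refine hnewton.not_gt ?_
    calc s.esymm (j + 1) ^ 2 = -s.esymm (j + 1) * -s.esymm (j + 1) := by ring
      _ ≤ a * s.esymm j * -s.esymm (j + 1) :=
        mul_le_mul_of_nonneg_right (by linarith) (neg_nonneg.2 hnonpos)
      _ = s.esymm j * -(a * s.esymm (j + 1)) := by ring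
      _ < s.esymm j * s.esymm (j + 2) := mul_lt_mul_of_pos_left (by linarith) hpos

theorem esymm_cons_lt_esymm_cons {a b : ℝ} {s : Multiset ℝ} {j k : ℕ} (hab : a < b)
    (h : a ::ₘ s ∈ gardingCone k) (hj : j + 1 ≤ k) :
    (a ::ₘ s).esymm (j + 1) < (b ::ₘ s).esymm (j + 1) := by
  obtain ⟨k, rfl⟩ := Nat.exists_eq_add_of_le' (le_add_self.trans hj : 1 ≤ k)
  rw [esymm_cons, esymm_cons]
  gcongr
  exact mem_gardingCone_of_cons h j (by omega)

theorem cons_mem_gardingCone_of_le {a b : ℝ} {s : Multiset ℝ} {k : ℕ} (hab : a ≤ b)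
    (h : a ::ₘ s ∈ gardingCone k) : b ::ₘ s ∈ gardingCone k := by
  rcases hab.eq_or_lt with rfl | hlt
  · exact h
  · rintro (_ | j) hj
    · simp [Multiset.esymm]
    · exact (h _ hj).trans (esymm_cons_lt_esymm_cons hlt h hj)

theorem add_mem_gardingCone_of_rel_le {s t : Multiset ℝ} (hst : s.Rel (· ≤ ·) t) {k : ℕ} :
    ∀ u : Multiset ℝ, s + u ∈ gardingCone k → t + u ∈ gardingCone k ∧
      (s ≠ t → ∀ j, j + 1 ≤ k → (s + u).esymm (j + 1) < (t + u).esymm (j + 1)) := by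
  induction hst with
  | zero => simp
  | @cons a b s t hab _ ih =>
    intro u hu
    rw [Multiset.cons_add, ← Multiset.add_cons] at hu
    obtain ⟨hmem, hlt⟩ := ih (a ::ₘ u) hu
    rw [Multiset.add_cons] at hmem
    refine ⟨by simpa only [Multiset.cons_add] using cons_mem_gardingCone_of_le hab hmem,
      fun hne j hj ↦ ?_⟩
    simp only [Multiset.cons_add]
    simp only [Multiset.add_cons] at hlt
    rcases hab.eq_or_lt with rfl | hab'
    · exact hlt (by simpa using hne) j hj
    · have hstep := esymm_cons_lt_esymm_cons hab' hmem hj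
      rcases eq_or_ne s t with rfl | hst
      · exact hstep
      · exact (hlt hst j hj).trans hstep

theorem mem_gardingCone_of_rel_le {s t : Multiset ℝ} {k : ℕ} (hst : s.Rel (· ≤ ·) t)
    (hs : s ∈ gardingCone k) : t ∈ gardingCone k := by
  simpa only [add_zero] using (add_mem_gardingCone_of_rel_le hst 0 (by rwa [add_zero])).1

theorem esymm_lt_esymm_of_rel_le {s t : Multiset ℝ} {k : ℕ} (hst : s.Rel (· ≤ ·) t)
    (hne : s ≠ t) (hs : s ∈ gardingCone k) (hk : 1 ≤ k) : s.esymm k < t.esymm k := by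
  obtain ⟨k, rfl⟩ := Nat.exists_eq_add_of_le' hk
  simpa only [add_zero] using
    (add_mem_gardingCone_of_rel_le hst 0 (by rwa [add_zero])).2 hne k le_rfl

theorem esymm_succ_le_esymm_mul_esymm_one {s : Multiset ℝ} {k : ℕ} (hs : s ∈ gardingCone k) :
    ∀ {j : ℕ}, j + 1 ≤ k → s.esymm (j + 1) ≤ s.esymm j * s.esymm 1 := by
  intro j
  induction j with
  | zero => simp [Multiset.esymm]
  | succ j ih =>
    intro hj
    have hnewton := esymm_mul_esymm_add_two_le_sq s j
    have hpos := hs j (by omega)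
    have hpos' := hs (j + 1) (by omega)
    refine le_of_mul_le_mul_left (hnewton.trans ?_) hpos
    nlinarith [ih (by omega)]

end GardingCone

section WeylMonotonicity

open scoped ComplexOrder

variable {𝕜 ι : Type*} [RCLike 𝕜] [Fintype ι] [DecidableEq ι] {A B : Matrix ι ι 𝕜}

theorem exists_ne_zero_forall_inner_eq_zero {κ E : Type*} [Fintype κ] [NormedAddCommGroup E]
    [InnerProductSpace 𝕜 E] [FiniteDimensional 𝕜 E] (w : κ → E)
    (h : Fintype.card κ < Module.finrank 𝕜 E) : ∃ x : E, x ≠ 0 ∧ ∀ i, inner 𝕜 (w i) x = 0 := by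
  have hspan : (Submodule.span 𝕜 (range w))ᗮ ≠ ⊥ := fun hbot ↦ by
    have hcard := finrank_range_le_card (R := 𝕜) w
    rw [Set.finrank, Submodule.orthogonal_eq_bot_iff.1 hbot, finrank_top] at hcard
    omega
  obtain ⟨x, hx, hx0⟩ := (Submodule.ne_bot_iff _).1 hspan
  exact ⟨x, hx0, fun i ↦ hx _ (Submodule.subset_span (mem_range_self i))⟩

theorem re_inner_toEuclideanLin_eq_sum (hA : A.IsHermitian) (x : EuclideanSpace 𝕜 ι) :
    RCLike.re (inner 𝕜 x (A.toEuclideanLin x)) =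
      ∑ j, hA.eigenvalues j * ‖inner 𝕜 (hA.eigenvectorBasis j) x‖ ^ 2 := by
  have heigen (j : ι) : A.toEuclideanLin (hA.eigenvectorBasis j) =
      (hA.eigenvalues j : 𝕜) • hA.eigenvectorBasis j := by
    ext i
    simpa [RCLike.real_smul_eq_coe_mul] using congrFun (hA.mulVec_eigenvectorBasis j) i
  rw [← hA.eigenvectorBasis.sum_inner_mul_inner, map_sum]
  refine Finset.sum_congr rfl fun j _ ↦ ?_
  rw [← (Matrix.isSymmetric_toEuclideanLin_iff.2 hA) (hA.eigenvectorBasis j) x, heigen,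
    inner_smul_left, RCLike.conj_ofReal, mul_left_comm, RCLike.re_ofReal_mul,
    inner_mul_symm_re_eq_norm, norm_mul, norm_inner_symm, ← sq]

theorem mul_sq_norm_le_re_inner_toEuclideanLin (hA : A.IsHermitian) {c : ℝ}
    {x : EuclideanSpace 𝕜 ι}
    (h : ∀ j, hA.eigenvalues j < c → inner 𝕜 (hA.eigenvectorBasis j) x = 0) :
    c * ‖x‖ ^ 2 ≤ RCLike.re (inner 𝕜 x (A.toEuclideanLin x)) := by
  rw [re_inner_toEuclideanLin_eq_sum hA, ← hA.eigenvectorBasis.sum_sq_norm_inner_right,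
    Finset.mul_sum]
  refine Finset.sum_le_sum fun j _ ↦ ?_
  rcases lt_or_ge (hA.eigenvalues j) c with hlt | hle
  · simp [h j hlt]
  · gcongr

theorem re_inner_toEuclideanLin_le_mul_sq_norm (hA : A.IsHermitian) {c : ℝ}
    {x : EuclideanSpace 𝕜 ι}
    (h : ∀ j, c < hA.eigenvalues j → inner 𝕜 (hA.eigenvectorBasis j) x = 0) :
    RCLike.re (inner 𝕜 x (A.toEuclideanLin x)) ≤ c * ‖x‖ ^ 2 := by
  rw [re_inner_toEuclideanLin_eq_sum hA, ← hA.eigenvectorBasis.sum_sq_norm_inner_right,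
    Finset.mul_sum]
  refine Finset.sum_le_sum fun j _ ↦ ?_
  rcases lt_or_ge c (hA.eigenvalues j) with hlt | hle
  · simp [h j hlt]
  · gcongr

theorem eigenvalues_le_eigenvalues_of_posSemidef_sub (hA : A.IsHermitian) (hB : B.IsHermitian)
    (h : (B - A).PosSemidef) (i : ι) : hA.eigenvalues i ≤ hB.eigenvalues i := by
  by_contra! hlt
  have hdim : Fintype.card {j // j ≠ i} < Module.finrank 𝕜 (EuclideanSpace 𝕜 ι) := by
    rw [finrank_euclideanSpace]
    exact Fintype.card_subtype_lt (x := i) (by simp)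
  let order : ι ≃ Fin (Fintype.card ι) :=
    (Fintype.equivOfCardEq (Fintype.card_fin (Fintype.card ι))).symm
  -- `x` avoids the eigenvectors of `A` after `i` and those of `B` before `i`.
  obtain ⟨x, hx0, hx⟩ := exists_ne_zero_forall_inner_eq_zero (𝕜 := 𝕜)
    (fun j : {j // j ≠ i} ↦ if order j < order i then hB.eigenvectorBasis j
      else hA.eigenvectorBasis j) hdim
  have hlower : hA.eigenvalues i * ‖x‖ ^ 2 ≤ RCLike.re (inner 𝕜 x (A.toEuclideanLin x)) := by
    refine mul_sq_norm_le_re_inner_toEuclideanLin hA fun j hj ↦ ?_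
    have hij : order i < order j := hA.eigenvalues₀_antitone.reflect_lt hj
    have hji : j ≠ i := by rintro rfl; exact hij.false
    simpa only [hij.not_gt, if_false] using hx ⟨j, hji⟩
  have hupper : RCLike.re (inner 𝕜 x (B.toEuclideanLin x)) ≤ hB.eigenvalues i * ‖x‖ ^ 2 := by
    refine re_inner_toEuclideanLin_le_mul_sq_norm hB fun j hj ↦ ?_
    have hji : order j < order i := hB.eigenvalues₀_antitone.reflect_lt hj
    have hne : j ≠ i := by rintro rfl; exact hji.false
    simpa only [hji, if_true] using hx ⟨j, hne⟩
  have hsub := (Matrix.isPositive_toEuclideanLin_iff.2 h).re_inner_nonneg_right x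
  rw [map_sub, LinearMap.sub_apply, inner_sub_right, map_sub] at hsub
  have hnorm : 0 < ‖x‖ ^ 2 := by positivity
  nlinarith

theorem rel_le_roots_charpoly_of_posSemidef_sub {A B : Matrix ι ι ℝ} (hA : A.IsHermitian)
    (hB : B.IsHermitian) (h : (B - A).PosSemidef) :
    A.charpoly.roots.Rel (· ≤ ·) B.charpoly.roots := by
  rw [hA.roots_charpoly_eq_eigenvalues, hB.roots_charpoly_eq_eigenvalues, Multiset.rel_map]
  exact Multiset.rel_refl_of_refl_on fun i _ ↦
    eigenvalues_le_eigenvalues_of_posSemidef_sub hA hB h i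

theorem roots_charpoly_ne_of_posSemidef_sub {A B : Matrix ι ι ℝ} (hA : A.IsHermitian)
    (hB : B.IsHermitian) (h : (B - A).PosSemidef) (hne : A ≠ B) :
    A.charpoly.roots ≠ B.charpoly.roots := by
  intro heq
  have htrace : (B - A).trace = 0 := by
    rw [Matrix.trace_sub, Matrix.trace_eq_sum_roots_charpoly_of_splits hA.splits_charpoly,
      Matrix.trace_eq_sum_roots_charpoly_of_splits hB.splits_charpoly, heq, sub_self]
  exact hne (sub_eq_zero.1 (h.trace_eq_zero_iff.1 htrace)).symm

end WeylMonotonicity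

section KHessianOfMatrices

variable {n k : ℕ} {A B : Matrix (Fin n) (Fin n) ℝ}

theorem esymmVec_eigenvalues (hA : A.IsHermitian) (j : ℕ) :
    esymmVec j hA.eigenvalues = A.charpoly.roots.esymm j := by
  rw [hA.roots_charpoly_eq_eigenvalues]
  exact (Finset.esymm_map_val _ _ _).symm

theorem sigmaMat_eq_esymm (hA : A.IsHermitian) (j : ℕ) :
    sigmaMat j A = A.charpoly.roots.esymm j := by
  rw [sigmaMat, dif_pos hA, esymmVec_eigenvalues]

theorem inGardingCone_iff :
    InGardingCone k A ↔ A.IsHermitian ∧ A.charpoly.roots ∈ gardingCone k := by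
  refine ⟨fun ⟨hA, h⟩ ↦ ⟨hA, ?_⟩, fun ⟨hA, h⟩ ↦ ⟨hA, fun j _ hj ↦ ?_⟩⟩
  · rintro (_ | j) hj
    · simp [Multiset.esymm]
    · rw [← esymmVec_eigenvalues hA]
      exact h _ (Nat.succ_pos j) hj
  · rw [esymmVec_eigenvalues hA]
    exact h j hj

theorem InGardingCone.isHermitian (hA : InGardingCone k A) : A.IsHermitian :=
  hA.1

theorem InGardingCone.of_posSemidef_sub (hA : InGardingCone k A) (hB : B.IsHermitian)
    (h : (B - A).PosSemidef) : InGardingCone k B := by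
  obtain ⟨hherm, hcone⟩ := inGardingCone_iff.1 hA
  exact inGardingCone_iff.2 ⟨hB,
    mem_gardingCone_of_rel_le (rel_le_roots_charpoly_of_posSemidef_sub hherm hB h) hcone⟩

theorem sigmaMat_lt_sigmaMat (hk : 1 ≤ k) (hA : InGardingCone k A) (hB : B.IsHermitian)
    (h : (B - A).PosSemidef) (hne : A ≠ B) : sigmaMat k A < sigmaMat k B := by
  obtain ⟨hherm, hcone⟩ := inGardingCone_iff.1 hA
  rw [sigmaMat_eq_esymm hherm, sigmaMat_eq_esymm hB]
  exact esymm_lt_esymm_of_rel_le (rel_le_roots_charpoly_of_posSemidef_sub hherm hB h)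
    (roots_charpoly_ne_of_posSemidef_sub hherm hB h hne) hcone hk

theorem sigmaMat_le_sigmaMat (hk : 1 ≤ k) (hA : InGardingCone k A) (hB : B.IsHermitian)
    (h : (B - A).PosSemidef) : sigmaMat k A ≤ sigmaMat k B := by
  rcases eq_or_ne A B with rfl | hne
  · rfl
  · exact (sigmaMat_lt_sigmaMat hk hA hB h hne).le

/-- `σ_k(A)` as a coefficient of the characteristic polynomial. It agrees with `sigmaMat` on
symmetric matrices and, being a polynomial in the entries, is smooth on all matrices. -/
def charpolySigma (k : ℕ) (A : Matrix (Fin n) (Fin n) ℝ) : ℝ :=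
  (-1) ^ k * A.charpoly.coeff (n - k)

theorem sigmaMat_eq_charpolySigma (hkn : k ≤ n) (hA : A.IsHermitian) :
    sigmaMat k A = charpolySigma k A := by
  have hcoeff := Polynomial.coeff_eq_esymm_roots_of_splits hA.splits_charpoly
    (show n - k ≤ A.charpoly.natDegree by simp)
  rw [A.charpoly_monic.leadingCoeff, A.charpoly_natDegree_eq_dim, Fintype.card_fin,
    Nat.sub_sub_self hkn, one_mul] at hcoeff
  rw [sigmaMat_eq_esymm hA, charpolySigma, hcoeff, ← mul_assoc, ← mul_pow]
  simp

theorem charpoly_smul_comp (c : ℝ) (A : Matrix (Fin n) (Fin n) ℝ) :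
    (c • A).charpoly.comp (Polynomial.C c * Polynomial.X) =
      Polynomial.C (c ^ n) * A.charpoly := by
  refine Polynomial.funext fun x ↦ ?_
  have hsmul : Matrix.scalar (Fin n) (c * x) - c • A = c • (Matrix.scalar (Fin n) x - A) := by
    simp [smul_sub, Matrix.smul_eq_diagonal_mul]
  simp only [Polynomial.eval_comp, Polynomial.eval_mul, Polynomial.eval_C, Polynomial.eval_X,
    Matrix.eval_charpoly, hsmul, Matrix.det_smul, Fintype.card_fin]

theorem charpolySigma_smul (hkn : k ≤ n) {c : ℝ} (hc : c ≠ 0) (A : Matrix (Fin n) (Fin n) ℝ) :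
    charpolySigma k (c • A) = c ^ k * charpolySigma k A := by
  have hcoeff := congrArg (Polynomial.coeff · (n - k)) (charpoly_smul_comp c A)
  simp only [Polynomial.comp_C_mul_X_coeff, Polynomial.coeff_C_mul] at hcoeff
  rw [← pow_sub_mul_pow c (Nat.sub_le n k), Nat.sub_sub_self hkn, mul_right_comm] at hcoeff
  rw [charpolySigma, charpolySigma, mul_right_cancel₀ (pow_ne_zero _ hc) hcoeff]
  ring

theorem isHermitian_smul (hA : A.IsHermitian) (c : ℝ) : (c • A).IsHermitian :=
  hA.smul (IsSelfAdjoint.all c)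

theorem sigmaMat_smul (hkn : k ≤ n) {c : ℝ} (hc : c ≠ 0) (hA : A.IsHermitian) :
    sigmaMat k (c • A) = c ^ k * sigmaMat k A := by
  rw [sigmaMat_eq_charpolySigma hkn (isHermitian_smul hA c), sigmaMat_eq_charpolySigma hkn hA,
    charpolySigma_smul hkn hc]

theorem InGardingCone.sigmaMat_pos (hA : InGardingCone k A) : 0 < sigmaMat k A := by
  obtain ⟨hherm, hcone⟩ := inGardingCone_iff.1 hA
  rw [sigmaMat_eq_esymm hherm]
  exact hcone k le_rfl

theorem InGardingCone.of_le {j : ℕ} (hA : InGardingCone k A) (hj : j ≤ k) : InGardingCone j A :=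
  ⟨hA.1, fun i hi hij ↦ hA.2 i hi (hij.trans hj)⟩

theorem InGardingCone.smul (hkn : k ≤ n) (hA : InGardingCone k A) {c : ℝ} (hc : 0 < c) :
    InGardingCone k (c • A) := by
  refine ⟨isHermitian_smul hA.isHermitian c, fun j _ hj ↦ ?_⟩
  rw [esymmVec_eigenvalues, ← sigmaMat_eq_esymm (isHermitian_smul hA.isHermitian c),
    sigmaMat_smul (hj.trans hkn) hc.ne' hA.isHermitian]
  exact mul_pos (pow_pos hc j) (hA.of_le hj).sigmaMat_pos

open scoped Matrix.Norms.Elementwise in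
theorem contDiff_charpolySigma (k : ℕ) {m : WithTop ℕ∞} :
    ContDiff ℝ m (charpolySigma k : Matrix (Fin n) (Fin n) ℝ → ℝ) := by
  let entries : Matrix (Fin n) (Fin n) ℝ →ₗ[ℝ] (Fin n × Fin n → ℝ) :=
    LinearMap.pi fun i ↦ Matrix.entryLinearMap ℝ ℝ i.1 i.2
  have hpoly (A : Matrix (Fin n) (Fin n) ℝ) : charpolySigma k A = (-1) ^ k *
      MvPolynomial.eval (entries A) ((Matrix.charpoly.univ ℝ (Fin n)).coeff (n - k)) :=
    congrArg ((-1) ^ k * ·)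
      (Matrix.charpoly.univ_coeff_eval₂Hom (Fin n) (RingHom.id ℝ) (entries A) (n - k)).symm
  rw [funext hpoly]
  exact contDiff_const.mul (AnalyticOnNhd.eval_linearMap entries _).contDiff

open scoped Matrix.Norms.Elementwise in
theorem continuous_charpolySigma (k : ℕ) :
    Continuous (charpolySigma k : Matrix (Fin n) (Fin n) ℝ → ℝ) :=
  (contDiff_charpolySigma k (m := 0)).continuous

theorem mem_gardingCone_of_nonneg {s : Multiset ℝ} (hnonneg : ∀ j ≤ k, 0 ≤ s.esymm j)
    (hratio : ∀ j, j + 1 ≤ k → s.esymm (j + 1) ≤ s.esymm j * s.esymm 1)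
    (hpos : 0 < s.esymm k) : s ∈ gardingCone k := by
  intro j hj
  induction hj using Nat.decreasingInduction with
  | self => exact hpos
  | of_succ j hj ih =>
    refine (hnonneg j hj.le).lt_of_ne fun hzero ↦ ?_
    have := hratio j hj
    rw [← hzero, zero_mul] at this
    exact this.not_gt ih

theorem inGardingCone_of_tendsto {α : Type*} {l : Filter α} [l.NeBot] (hkn : k ≤ n)
    {F : α → Matrix (Fin n) (Fin n) ℝ} (hF : Tendsto F l (𝓝 A))
    (hcone : ∀ᶠ x in l, InGardingCone k (F x)) {c : ℝ} (hc : 0 < c)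
    (hle : ∀ᶠ x in l, c ≤ sigmaMat k (F x)) : InGardingCone k A := by
  have hA : A.IsHermitian :=
    (isClosed_eq continuous_id.matrix_conjTranspose continuous_id).mem_of_tendsto hF
      (hcone.mono fun x hx ↦ hx.isHermitian)
  have hlim (j : ℕ) (hj : j ≤ k) :
      Tendsto (fun x ↦ (F x).charpoly.roots.esymm j) l (𝓝 (A.charpoly.roots.esymm j)) := by
    rw [← sigmaMat_eq_esymm hA, sigmaMat_eq_charpolySigma (hj.trans hkn) hA]
    refine (((continuous_charpolySigma j).tendsto A).comp hF).congr' ?_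
    filter_upwards [hcone] with x hx
    rw [← sigmaMat_eq_esymm hx.isHermitian, Function.comp_apply,
      sigmaMat_eq_charpolySigma (hj.trans hkn) hx.isHermitian]
  refine inGardingCone_iff.2 ⟨hA, mem_gardingCone_of_nonneg (fun j hj ↦ ?_) (fun j hj ↦ ?_) ?_⟩
  · exact ge_of_tendsto (hlim j hj)
      (hcone.mono fun x hx ↦ ((inGardingCone_iff.1 hx).2 j hj).le)
  · exact le_of_tendsto_of_tendsto (hlim _ hj)
      ((hlim j (by omega)).mul (hlim 1 (by omega)))
      (hcone.mono fun x hx ↦ esymm_succ_le_esymm_mul_esymm_one (inGardingCone_iff.1 hx).2 hj)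
  · refine hc.trans_le (ge_of_tendsto (hlim k le_rfl) ?_)
    filter_upwards [hcone, hle] with x hx hcx
    rwa [← sigmaMat_eq_esymm hx.isHermitian]

end KHessianOfMatrices

section RankOnePerturbations

theorem det_add_smul_vecMulVec {ι R : Type*} [Fintype ι] [DecidableEq ι] [CommRing R] [IsDomain R]
    {M : Matrix ι ι R} (hM : M.det ≠ 0) (u v : ι → R) (t : R) :
    (M + t • Matrix.vecMulVec u v).det =
      M.det + t * ((M + Matrix.vecMulVec u v).det - M.det) := by
  let frac := algebraMap R (FractionRing R)
  have hunit : IsUnit (frac.mapMatrix M).det := by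
    rw [← RingHom.map_det, isUnit_iff_ne_zero]
    exact (map_ne_zero_iff frac (IsFractionRing.injective R _)).2 hM
  let c := Matrix.replicateRow Unit (frac ∘ v) * (frac.mapMatrix M)⁻¹ *
    Matrix.replicateCol Unit (frac ∘ u)
  have hdet (s : R) : frac (M + s • Matrix.vecMulVec u v).det =
      frac M.det * (1 + frac s * c () ()) := by
    have hmap : frac.mapMatrix (M + s • Matrix.vecMulVec u v) = frac.mapMatrix M +
        Matrix.replicateCol Unit (frac s • (frac ∘ u)) * Matrix.replicateRow Unit (frac ∘ v) := by
      rw [← Matrix.vecMulVec_eq]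
      ext i j
      simp [Matrix.vecMulVec_apply]
    rw [RingHom.map_det, hmap, Matrix.det_add_replicateCol_mul_replicateRow hunit,
      Matrix.replicateCol_smul, Matrix.mul_smul, Matrix.det_unique (n := Unit), RingHom.map_det]
    simp only [Matrix.add_apply, Matrix.one_apply_eq, Matrix.smul_apply, smul_eq_mul, c,
      PUnit.default_eq_unit]
  apply IsFractionRing.injective R (FractionRing R)
  have hone := hdet 1
  rw [one_smul, map_one, one_mul] at hone
  rw [map_add, map_mul, map_sub, hdet t, hone]
  ring

theorem charpoly_add_smul_vecMulVec {ι R : Type*} [Fintype ι] [DecidableEq ι] [CommRing R]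
    [IsDomain R] (A : Matrix ι ι R) (u v : ι → R) (t : R) :
    (A + t • Matrix.vecMulVec u v).charpoly = A.charpoly + Polynomial.C t *
      ((A + Matrix.vecMulVec u v).charpoly - A.charpoly) := by
  have hchar (s : R) : (A + s • Matrix.vecMulVec u v).charmatrix = A.charmatrix +
      Polynomial.C s • Matrix.vecMulVec (-(Polynomial.C ∘ u)) (Polynomial.C ∘ v) := by
    ext1 i j
    simp only [Matrix.charmatrix_apply, Matrix.add_apply, Matrix.smul_apply,
      Matrix.vecMulVec_apply, smul_eq_mul, map_add, map_mul, Pi.neg_apply, Function.comp_apply]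
    ring
  have hone := hchar 1
  rw [one_smul, map_one, one_smul] at hone
  simp only [Matrix.charpoly, hchar t, hone]
  exact det_add_smul_vecMulVec A.charpoly_monic.ne_zero _ _ _

theorem charpolySigma_add_smul_vecMulVec {n : ℕ} (k : ℕ) (A : Matrix (Fin n) (Fin n) ℝ)
    (u v : Fin n → ℝ) (t : ℝ) :
    charpolySigma k (A + t • Matrix.vecMulVec u v) = charpolySigma k A +
      t * (charpolySigma k (A + Matrix.vecMulVec u v) - charpolySigma k A) := by
  simp only [charpolySigma, charpoly_add_smul_vecMulVec, Polynomial.coeff_add,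
    Polynomial.coeff_C_mul, Polynomial.coeff_sub]
  ring

theorem eventually_apply_sub_smul_lt {E : Type*} [NormedAddCommGroup E] [NormedSpace ℝ E]
    {f : E → ℝ} {L : E →L[ℝ] ℝ} {a v : E} (hf : HasStrictFDerivAt f L a) (hv : 0 < L v) :
    ∀ᶠ q : (E × E) × ℝ in 𝓝 ((a, v), 0), 0 < q.2 → f (q.1.1 - q.2 • q.1.2) < f q.1.1 := by
  obtain ⟨c, hc, hcv⟩ : ∃ c > 0, c * ‖v‖ < L v := by
    have hcont : Tendsto (fun c : ℝ ↦ c * ‖v‖) (𝓝[>] 0) (𝓝 0) := by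
      simpa using (continuous_mul_const ‖v‖).continuousWithinAt.tendsto (x := (0 : ℝ)) (s := Ioi 0)
    exact ((eventually_mem_nhdsWithin).and (hcont.eventually_lt_const hv)).exists
  have hpair : Tendsto (fun q : (E × E) × ℝ ↦ (q.1.1, q.1.1 - q.2 • q.1.2))
      (𝓝 ((a, v), 0)) (𝓝 (a, a)) :=
    Continuous.tendsto' (by fun_prop) _ _ (by simp)
  have hgrowth : ∀ᶠ q : (E × E) × ℝ in 𝓝 ((a, v), 0), c * ‖q.1.2‖ < L q.1.2 :=
    ContinuousAt.eventually_lt (by fun_prop) (by fun_prop) hcv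
  filter_upwards [hpair.eventually (hf.isLittleO.bound hc), hgrowth] with q hq hgrow hpos
  rw [sub_sub_cancel, map_smul, norm_smul, Real.norm_of_nonneg hpos.le, smul_eq_mul] at hq
  have habs := (abs_le.1 hq).1
  nlinarith

open scoped Matrix.Norms.Elementwise

variable {n k : ℕ} {A : Matrix (Fin n) (Fin n) ℝ}

theorem fderiv_charpolySigma_vecMulVec (u v : Fin n → ℝ) :
    fderiv ℝ (charpolySigma k) A (Matrix.vecMulVec u v) =
      charpolySigma k (A + Matrix.vecMulVec u v) - charpolySigma k A := by
  have hdiff : DifferentiableAt ℝ (charpolySigma k) A :=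
    ((contDiff_charpolySigma k (m := 1)).differentiable one_ne_zero) A
  refine hdiff.lineDeriv_eq_fderiv.symm.trans ?_
  simp [lineDeriv, charpolySigma_add_smul_vecMulVec]

theorem fderiv_charpolySigma_vecMulVec_self_pos (hk : 1 ≤ k) (hkn : k ≤ n)
    (hA : InGardingCone k A) {w : Fin n → ℝ} (hw : w ≠ 0) :
    0 < fderiv ℝ (charpolySigma k) A (Matrix.vecMulVec w w) := by
  have hpsd : (Matrix.vecMulVec w w).PosSemidef := by
    simpa using Matrix.posSemidef_vecMulVec_self_star w
  have hherm : (A + Matrix.vecMulVec w w).IsHermitian := hA.isHermitian.add hpsd.isHermitian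
  have hne : A ≠ A + Matrix.vecMulVec w w := fun h ↦ by
    rw [left_eq_add, Matrix.vecMulVec_eq_zero, or_self] at h
    exact hw h
  rw [fderiv_charpolySigma_vecMulVec, sub_pos, ← sigmaMat_eq_charpolySigma hkn hA.isHermitian,
    ← sigmaMat_eq_charpolySigma hkn hherm]
  exact sigmaMat_lt_sigmaMat hk hA hherm (by rwa [add_sub_cancel_left]) hne

theorem exists_eventually_charpolySigma_sub_smul_lt (hk : 1 ≤ k) (hkn : k ≤ n)
    (hA : InGardingCone k A) {w : Fin n → ℝ} (hw : w ≠ 0) (G : Matrix (Fin n) (Fin n) ℝ) :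
    ∃ t > (0 : ℝ), ∀ᶠ q : (Matrix (Fin n) (Fin n) ℝ × Matrix (Fin n) (Fin n) ℝ) × ℝ in
      𝓝 ((A, t • Matrix.vecMulVec w w - G), 0), 0 < q.2 →
        charpolySigma k (q.1.1 - q.2 • q.1.2) < charpolySigma k q.1.1 := by
  let L := fderiv ℝ (charpolySigma k) A
  have hL := fderiv_charpolySigma_vecMulVec_self_pos hk hkn hA hw
  obtain ⟨t, ht, hlt⟩ := ((eventually_gt_atTop 0).and
    ((tendsto_id.atTop_mul_const hL).eventually_gt_atTop (L G))).exists
  refine ⟨t, ht, eventually_apply_sub_smul_lt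
    ((contDiff_charpolySigma k).contDiffAt.hasStrictFDerivAt one_ne_zero) ?_⟩
  rw [map_sub, map_smul, smul_eq_mul, sub_pos]
  exact hlt

end RankOnePerturbations

section SecondDerivativeTest

theorem deriv_deriv_nonpos_of_isLocalMax {g : ℝ → ℝ} {t : ℝ} (hg : ContinuousAt g t)
    (hmax : IsLocalMax g t) : deriv (deriv g) t ≤ 0 := by
  by_contra! hpos
  have hmin : IsLocalMin g t := isLocalMin_of_deriv_deriv_pos hpos hmax.deriv_eq_zero hg
  have hconst : g =ᶠ[𝓝 t] fun _ ↦ g t := by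
    filter_upwards [hmax, hmin] with s h₁ h₂ using le_antisymm h₁ h₂
  simp [hconst.deriv.deriv_eq] at hpos

variable {E F : Type*} [NormedAddCommGroup E] [NormedSpace ℝ E] [NormedAddCommGroup F]
  [NormedSpace ℝ F]

theorem eventually_differentiableAt_of_contDiffAt_two {f : E → F} {x : E}
    (hf : ContDiffAt ℝ 2 f x) : ∀ᶠ y in 𝓝 x, DifferentiableAt ℝ f y :=
  (hf.eventually (by simp)).mono fun _ hy ↦ hy.differentiableAt (by norm_num)

theorem differentiableAt_fderiv_of_contDiffAt_two {f : E → F} {x : E}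
    (hf : ContDiffAt ℝ 2 f x) : DifferentiableAt ℝ (fderiv ℝ f) x :=
  (hf.fderiv_right (m := 1) (by norm_num)).differentiableAt (by norm_num)

theorem deriv_deriv_add_smul {f : E → F} {x : E} (hf : ContDiffAt ℝ 2 f x) (v : E) :
    deriv (deriv fun t : ℝ ↦ f (x + t • v)) 0 = fderiv ℝ (fderiv ℝ f) x v v := by
  have hline (t : ℝ) : HasDerivAt (fun t : ℝ ↦ x + t • v) v t := by
    simpa using ((hasDerivAt_id t).smul_const v).const_add x
  have hcont : Tendsto (fun t : ℝ ↦ x + t • v) (𝓝 0) (𝓝 x) := by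
    simpa using (hline 0).continuousAt.tendsto
  have hderiv : deriv (fun t : ℝ ↦ f (x + t • v)) =ᶠ[𝓝 0] fun t ↦ fderiv ℝ f (x + t • v) v := by
    filter_upwards [hcont.eventually (eventually_differentiableAt_of_contDiffAt_two hf)] with t ht
    exact (ht.hasFDerivAt.comp_hasDerivAt t (hline t)).deriv
  have hfderiv : HasFDerivAt (fderiv ℝ f) (fderiv ℝ (fderiv ℝ f) x) (x + (0 : ℝ) • v) := by
    simpa using (differentiableAt_fderiv_of_contDiffAt_two hf).hasFDerivAt
  have hcomp : HasDerivAt (fun t : ℝ ↦ fderiv ℝ f (x + t • v)) (fderiv ℝ (fderiv ℝ f) x v) 0 :=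
    hfderiv.comp_hasDerivAt (0 : ℝ) (hline 0)
  rw [hderiv.deriv_eq, (hcomp.clm_apply (hasDerivAt_const (0 : ℝ) v)).deriv, map_zero, add_zero]

theorem fderiv_fderiv_apply_nonpos_of_isLocalMax {f : E → ℝ} {x : E} (hf : ContDiffAt ℝ 2 f x)
    (hmax : IsLocalMax f x) (v : E) : fderiv ℝ (fderiv ℝ f) x v v ≤ 0 := by
  have hcont : ContinuousAt (fun t : ℝ ↦ x + t • v) 0 := by fun_prop
  have hzero : x + (0 : ℝ) • v = x := by simp
  rw [← deriv_deriv_add_smul hf]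
  refine deriv_deriv_nonpos_of_isLocalMax ?_ ?_
  · exact ContinuousAt.comp (g := f) (by rw [hzero]; exact hf.continuousAt) hcont
  · exact IsLocalMax.comp_continuous (f := f) (by rw [hzero]; exact hmax) hcont

end SecondDerivativeTest

section Hessians

variable {n k : ℕ} {u v : Euc n → ℝ} {x : Euc n}

theorem hessian_apply (u : Euc n → ℝ) (x : Euc n) (i j : Fin n) :
    hessian u x i j =
      fderiv ℝ (fderiv ℝ u) x (EuclideanSpace.single i 1) (EuclideanSpace.single j 1) := by
  simp [hessian, iteratedFDeriv_two_apply]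

theorem hessianWithin_eq_hessian {s : Set (Euc n)} (hs : s ∈ 𝓝 x) :
    hessianWithin u s x = hessian u x := by
  have hcongr : iteratedFDerivWithin ℝ 2 u s x = iteratedFDeriv ℝ 2 u x := by
    rw [← iteratedFDerivWithin_univ]
    exact iteratedFDerivWithin_congr_set (by simpa using hs) 2
  ext i j
  simp only [hessianWithin, hessian, hcongr]

theorem hessian_sub (hu : ContDiffAt ℝ 2 u x) (hv : ContDiffAt ℝ 2 v x) :
    hessian (u - v) x = hessian u x - hessian v x := by
  ext i j
  simp [hessian, iteratedFDeriv_sub_apply hu hv]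

theorem hessian_const_smul (c : ℝ) (hu : ContDiffAt ℝ 2 u x) :
    hessian (c • u) x = c • hessian u x := by
  ext i j
  simp [hessian, iteratedFDeriv_const_smul_apply hu]

theorem isHermitian_hessian (hu : ContDiffAt ℝ 2 u x) : (hessian u x).IsHermitian := by
  ext i j
  simpa only [Matrix.conjTranspose_apply, hessian_apply, star_trivial] using
    hu.isSymmSndFDerivAt (by simp) _ _

theorem dotProduct_hessian_mulVec (u : Euc n → ℝ) (x : Euc n) (w : Fin n → ℝ) :
    w ⬝ᵥ (hessian u x).mulVec w =
      fderiv ℝ (fderiv ℝ u) x (WithLp.toLp 2 w) (WithLp.toLp 2 w) := by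
  have hw : WithLp.toLp 2 w = ∑ i, w i • (EuclideanSpace.single i (1 : ℝ) : Euc n) := by
    ext j; simp [Pi.single_apply]
  simp only [hw, map_sum, map_smul, sum_apply, smul_apply, smul_eq_mul, Matrix.mulVec, dotProduct,
    hessian_apply, Finset.mul_sum]
  rw [Finset.sum_comm]
  exact Finset.sum_congr rfl fun i _ ↦ Finset.sum_congr rfl fun j _ ↦ by ring

theorem posSemidef_hessian_sub_hessian (hu : ContDiffAt ℝ 2 u x) (hv : ContDiffAt ℝ 2 v x)
    (hmax : IsLocalMax (u - v) x) : (hessian v x - hessian u x).PosSemidef := by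
  refine .of_dotProduct_mulVec_nonneg ((isHermitian_hessian hv).sub (isHermitian_hessian hu))
    fun w ↦ ?_
  have hsnd : fderiv ℝ (fderiv ℝ (u - v)) x (WithLp.toLp 2 w) (WithLp.toLp 2 w) ≤ 0 :=
    fderiv_fderiv_apply_nonpos_of_isLocalMax (hu.sub hv) hmax _
  rw [← dotProduct_hessian_mulVec, hessian_sub hu hv, ← neg_sub, Matrix.neg_mulVec,
    dotProduct_neg] at hsnd
  simpa using hsnd

theorem continuousAt_hessian (hu : ContDiffAt ℝ 2 u x) : ContinuousAt (hessian u) x := by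
  refine continuousAt_pi.2 fun i ↦ continuousAt_pi.2 fun j ↦ ?_
  exact ((continuous_eval_const
    ![EuclideanSpace.single i (1 : ℝ), EuclideanSpace.single j (1 : ℝ)]).continuousAt).comp
    (hu.continuousAt_iteratedFDeriv le_rfl)

/-- `u` and `v` are `C²` on `D`, `u` is strictly `k`-convex there, and `σ_k(D²v) ≤ σ_k(D²u)`:
the differential hypothesis of the comparison principles below, in which `u` is the
subsolution and `v` the supersolution. No convexity of `v` is required. -/
structure HessianComparison {n : ℕ} (k : ℕ) (u v : Euc n → ℝ) (D : Set (Euc n)) : Prop where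
  contDiffAt_left : ∀ x ∈ D, ContDiffAt ℝ 2 u x
  contDiffAt_right : ∀ x ∈ D, ContDiffAt ℝ 2 v x
  inGardingCone : ∀ x ∈ D, InGardingCone k (hessian u x)
  sigmaMat_le : ∀ x ∈ D, sigmaMat k (hessian v x) ≤ sigmaMat k (hessian u x)

theorem HessianComparison.mono {D D' : Set (Euc n)} (h : HessianComparison k u v D)
    (hD : D' ⊆ D) : HessianComparison k u v D' :=
  ⟨fun x hx ↦ h.1 x (hD hx), fun x hx ↦ h.2 x (hD hx), fun x hx ↦ h.3 x (hD hx),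
    fun x hx ↦ h.4 x (hD hx)⟩

end Hessians

section MaximumPrinciple

variable {X : Type*} [MetricSpace X] [ProperSpace X] {D : Set X} {f : X → ℝ} {m : ℝ}

theorem le_on_closure_of_forall_not_isLocalMax (hDo : IsOpen D) (hDb : IsBounded D)
    (hf : ContinuousOn f (closure D)) (hmax : ∀ x ∈ D, ¬IsLocalMax f x)
    (hm : ∀ x ∈ frontier D, f x ≤ m) : ∀ x ∈ closure D, f x ≤ m := by
  intro x hx
  obtain ⟨z, hz, hzmax⟩ := hDb.isCompact_closure.exists_isMaxOn ⟨x, hx⟩ hf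
  have hzD : z ∉ D := fun h ↦
    hmax z h (hzmax.isLocalMax (mem_of_superset (hDo.mem_nhds h) subset_closure))
  exact (hzmax hx).trans (hm z (hDo.frontier_eq ▸ ⟨hz, hzD⟩))

theorem lt_of_forall_not_isLocalMax (hDo : IsOpen D) (hDb : IsBounded D)
    (hf : ContinuousOn f (closure D)) (hmax : ∀ x ∈ D, ¬IsLocalMax f x)
    (hm : ∀ x ∈ frontier D, f x ≤ m) : ∀ x ∈ D, f x < m := by
  have hle := le_on_closure_of_forall_not_isLocalMax hDo hDb hf hmax hm
  refine fun x hx ↦ (hle x (subset_closure hx)).lt_of_ne fun heq ↦ hmax x hx ?_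
  filter_upwards [hDo.mem_nhds hx] with y hy
  exact (hle y (subset_closure hy)).trans_eq heq.symm

end MaximumPrinciple

section ComparisonPrinciple

variable {n k : ℕ} {u v : Euc n → ℝ} {x : Euc n} {D : Set (Euc n)}

theorem not_inGardingCone_zero (hk : 1 ≤ k) : ¬InGardingCone k (0 : Matrix (Fin n) (Fin n) ℝ) := by
  rintro ⟨hherm, hpos⟩
  have hzero : hherm.eigenvalues = 0 := hherm.eigenvalues_eq_zero_iff.2 rfl
  simpa [esymmVec, hzero, Finset.powersetCard_one] using hpos 1 le_rfl hk

theorem not_isLocalMax_of_inGardingCone_hessian (hk : 1 ≤ k) (hu : ContDiffAt ℝ 2 u x)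
    (hcone : InGardingCone k (hessian u x)) : ¬IsLocalMax u x := by
  intro hmax
  have hzero : hessian (0 : Euc n → ℝ) x = 0 := by
    ext i j
    simp [hessian]
  have hpsd := posSemidef_hessian_sub_hessian hu contDiffAt_const (v := 0) (by simpa using hmax)
  rw [hzero] at hpsd
  exact not_inGardingCone_zero hk (hcone.of_posSemidef_sub Matrix.isHermitian_zero hpsd)

theorem HessianComparison.not_isLocalMax_smul_sub (hk : 1 ≤ k) (hkn : k ≤ n)
    (h : HessianComparison k u v D) {c : ℝ} (hc : 1 < c) (hx : x ∈ D) :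
    ¬IsLocalMax (c • u - v) x := by
  intro hmax
  have hu := h.contDiffAt_left x hx
  have hv := h.contDiffAt_right x hx
  have hcone := h.inGardingCone x hx
  have htouch := posSemidef_hessian_sub_hessian (hu.const_smul c) hv hmax
  rw [← Pi.smul_def, hessian_const_smul c hu] at htouch
  have hle := sigmaMat_le_sigmaMat hk (hcone.smul hkn (by linarith)) (isHermitian_hessian hv) htouch
  rw [sigmaMat_smul hkn (by linarith) hcone.isHermitian] at hle
  have hpos := hcone.sigmaMat_pos
  nlinarith [h.sigmaMat_le x hx, one_lt_pow₀ hc (Nat.one_le_iff_ne_zero.1 hk)]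

theorem HessianComparison.le_on_closure (hk : 1 ≤ k) (hkn : k ≤ n)
    (h : HessianComparison k u v D) (hDo : IsOpen D) (hDb : IsBounded D)
    (hu : ContinuousOn u (closure D)) (hv : ContinuousOn v (closure D))
    (hfr : ∀ x ∈ frontier D, u x ≤ v x) : ∀ x ∈ closure D, u x ≤ v x := by
  obtain ⟨K, hK⟩ := (hDb.isCompact_closure.image_of_continuousOn hu).bddAbove
  have huK {y : Euc n} (hy : y ∈ closure D) : u y ≤ K := hK (mem_image_of_mem u hy)
  intro x hx
  have hlim : Tendsto (fun c : ℝ ↦ c * u x - (c - 1) * K) (𝓝[>] 1) (𝓝 (1 * u x - (1 - 1) * K)) :=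
    Continuous.continuousWithinAt (by fun_prop)
  have hbound : ∀ᶠ c : ℝ in 𝓝[>] 1, c * u x - (c - 1) * K ≤ v x := by
    filter_upwards [self_mem_nhdsWithin] with c (hc : 1 < c)
    have hle : (c • u - v) x ≤ (c - 1) * K :=
      le_on_closure_of_forall_not_isLocalMax hDo hDb ((hu.const_smul c).sub hv)
        (fun y hy ↦ h.not_isLocalMax_smul_sub hk hkn hc hy)
        (fun y hy ↦ by
          simp only [Pi.sub_apply, Pi.smul_apply, smul_eq_mul]
          nlinarith [hfr y hy, huK (frontier_subset_closure hy)]) x hx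
    simp only [Pi.sub_apply, Pi.smul_apply, smul_eq_mul] at hle
    linarith
  simpa using le_of_tendsto hlim hbound

end ComparisonPrinciple

section HopfLemma

variable {n k : ℕ} {u v b : Euc n → ℝ} {p x y : Euc n} {r : ℝ} {D : Set (Euc n)}

/-- The barrier `q + α q²` with `q = r² - ‖x - y‖²`: it vanishes on the sphere of radius `r`
about `y`, grows inwards, and a large `α` makes its Hessian on that sphere very positive in the
normal direction. -/
def hopfBarrier (y : Euc n) (r α : ℝ) (x : Euc n) : ℝ :=
  (r ^ 2 - ‖x - y‖ ^ 2) + α * (r ^ 2 - ‖x - y‖ ^ 2) ^ 2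

theorem contDiff_hopfBarrier (y : Euc n) (r α : ℝ) {m : WithTop ℕ∞} :
    ContDiff ℝ m (hopfBarrier y r α) := by
  have hq : ContDiff ℝ m fun x : Euc n ↦ r ^ 2 - ‖x - y‖ ^ 2 :=
    contDiff_const.sub ((contDiff_id.sub contDiff_const).norm_sq ℝ)
  exact hq.add (contDiff_const.mul (hq.pow 2))

theorem hopfBarrier_eq_zero (hx : x ∈ sphere y r) (α : ℝ) : hopfBarrier y r α x = 0 := by
  rw [mem_sphere_iff_norm] at hx
  simp [hopfBarrier, hx]

theorem hasFDerivAt_sub_norm_sub_sq (y : Euc n) (r : ℝ) (x : Euc n) :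
    HasFDerivAt (fun x ↦ r ^ 2 - ‖x - y‖ ^ 2) ((-2 : ℝ) • innerSL ℝ (x - y)) x := by
  refine (((hasFDerivAt_id x).sub_const y).norm_sq.const_sub (r ^ 2)).congr_fderiv ?_
  ext w
  simp

theorem hasFDerivAt_hopfBarrier (y : Euc n) (r α : ℝ) (x : Euc n) :
    HasFDerivAt (hopfBarrier y r α)
      ((1 + 2 * α * (r ^ 2 - ‖x - y‖ ^ 2)) • (-2 : ℝ) • innerSL ℝ (x - y)) x := by
  have hq := hasFDerivAt_sub_norm_sub_sq y r x
  refine (hq.add ((hq.pow 2).const_mul α)).congr_fderiv ?_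
  ext w
  simp only [map_sub, neg_smul, Nat.add_one_sub_one, pow_one, nsmul_eq_mul, Nat.cast_ofNat,
    smul_neg, add_apply, neg_apply, smul_apply, sub_apply, coe_innerSL_apply, smul_eq_mul]
  ring

theorem hessian_hopfBarrier (hx : x ∈ sphere y r) (α : ℝ) :
    hessian (hopfBarrier y r α) x =
      (8 * α) • Matrix.vecMulVec (x - y) (x - y) - (2 : ℝ) • (1 : Matrix (Fin n) (Fin n) ℝ) := by
  have hinner : HasFDerivAt (fun x : Euc n ↦ innerSL ℝ (x - y)) (innerSL ℝ) x :=
    (innerSL ℝ : Euc n →L[ℝ] Euc n →L[ℝ] ℝ).hasFDerivAt.comp x ((hasFDerivAt_id x).sub_const y)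
  have hfderiv : fderiv ℝ (hopfBarrier y r α) =
      (fun x ↦ 1 + 2 * α * (r ^ 2 - ‖x - y‖ ^ 2)) • (-2 : ℝ) • fun x ↦ innerSL ℝ (x - y) :=
    funext fun x ↦ (hasFDerivAt_hopfBarrier y r α x).fderiv
  have hscalar := ((hasFDerivAt_sub_norm_sub_sq y r x).const_mul (2 * α)).const_add 1
  rw [mem_sphere_iff_norm] at hx
  ext i j
  rw [hessian_apply, hfderiv, (hscalar.smul (hinner.const_smul (-2 : ℝ))).fderiv]
  have hbasis : innerSL ℝ (EuclideanSpace.single i 1 : Euc n) (EuclideanSpace.single j 1) =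
      if i = j then 1 else 0 := by
    simp [EuclideanSpace.inner_single_left]
  rw [Matrix.sub_apply, Matrix.smul_apply, Matrix.smul_apply, Matrix.vecMulVec_apply]
  simp only [add_apply, smul_apply, ContinuousLinearMap.smulRight_apply, Pi.smul_apply, hbasis]
  simp only [hx, sub_self, mul_zero, add_zero, smul_eq_mul, mul_ite, mul_one, mul_neg, one_mul,
    map_sub, sub_apply, coe_innerSL_apply, EuclideanSpace.inner_single_right, Real.ringHom_apply,
    neg_mul, neg_neg, PiLp.sub_apply, Matrix.one_apply]
  split_ifs <;> ring

theorem exists_contDiff_barrier (hk : 1 ≤ k) (hkn : k ≤ n) {A : Matrix (Fin n) (Fin n) ℝ}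
    (hA : InGardingCone k A) (hr : 0 < r) (hp : p ∈ sphere y r) :
    ∃ b : Euc n → ℝ, ContDiff ℝ 2 b ∧ (∀ x ∈ sphere y r, b x = 0) ∧ 0 < fderiv ℝ b p (y - p) ∧
      ∀ᶠ q : (Matrix (Fin n) (Fin n) ℝ × Euc n) × ℝ in 𝓝 ((A, p), 0), 0 < q.2 →
        charpolySigma k (q.1.1 - q.2 • hessian b q.1.2) < charpolySigma k q.1.1 := by
  have hnorm : ‖p - y‖ = r := mem_sphere_iff_norm.1 hp
  have hne : ((p - y : Euc n) : Fin n → ℝ) ≠ 0 := by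
    rw [Ne, WithLp.ofLp_eq_zero, ← norm_eq_zero, hnorm]
    exact hr.ne'
  obtain ⟨t, -, ht⟩ := exists_eventually_charpolySigma_sub_smul_lt hk hkn hA hne
    ((2 : ℝ) • (1 : Matrix (Fin n) (Fin n) ℝ))
  have hb : ContDiff ℝ 2 (hopfBarrier y r (t / 8)) := contDiff_hopfBarrier y r (t / 8)
  refine ⟨hopfBarrier y r (t / 8), hb, fun x hx ↦ hopfBarrier_eq_zero hx _, ?_, ?_⟩
  · rw [(hasFDerivAt_hopfBarrier y r (t / 8) p).fderiv, hnorm, ← neg_sub p y, map_neg]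
    simp only [sub_self, mul_zero, add_zero, one_smul, smul_apply, innerSL_apply_apply,
      real_inner_self_eq_norm_sq, hnorm, smul_eq_mul]
    nlinarith
  · rw [show t • Matrix.vecMulVec (p - y) (p - y) - (2 : ℝ) • 1 = hessian _ p by
      rw [hessian_hopfBarrier hp (t / 8), mul_div_cancel₀ t (by norm_num)]] at ht
    have hcont : ContinuousAt (fun q : (Matrix (Fin n) (Fin n) ℝ × Euc n) × ℝ ↦
        ((q.1.1, hessian (hopfBarrier y r (t / 8)) q.1.2), q.2)) ((A, p), 0) :=
      (continuousAt_fst.fst.prodMk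
        ((continuousAt_hessian hb.contDiffAt).comp continuousAt_fst.snd)).prodMk continuousAt_snd
    exact hcont.eventually ht

theorem HessianComparison.not_isLocalMax_add_smul_sub (hk : 1 ≤ k) (hkn : k ≤ n)
    (h : HessianComparison k u v D) (hx : x ∈ D) (hb : ContDiffAt ℝ 2 b x) {δ : ℝ}
    (hlt : charpolySigma k (hessian v x - δ • hessian b x) < charpolySigma k (hessian v x)) :
    ¬IsLocalMax (u + δ • b - v) x := by
  intro hmax
  have hu := h.contDiffAt_left x hx
  have hv := h.contDiffAt_right x hx
  have hw : ContDiffAt ℝ 2 (v - δ • b) x := hv.sub (hb.const_smul δ)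
  have hess : hessian (v - δ • b) x = hessian v x - δ • hessian b x := by
    rw [← hessian_const_smul δ hb]
    exact hessian_sub hv (hb.const_smul δ)
  have hle : sigmaMat k (hessian u x) ≤ sigmaMat k (hessian (v - δ • b) x) :=
    sigmaMat_le_sigmaMat hk (h.inGardingCone x hx) (isHermitian_hessian hw)
      (posSemidef_hessian_sub_hessian hu hw (by rwa [sub_sub_eq_add_sub]))
  rw [sigmaMat_eq_charpolySigma hkn (isHermitian_hessian hw), hess] at hle
  have hcmp := h.sigmaMat_le x hx
  rw [sigmaMat_eq_charpolySigma hkn (isHermitian_hessian hv)] at hcmp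
  linarith

theorem eventually_forall_mul_le {X : Type*} [TopologicalSpace X] {K : Set X}
    (hK : IsCompact K) {f g : X → ℝ} (hf : ContinuousOn f K) (hg : ContinuousOn g K)
    (hpos : ∀ x ∈ K, 0 < f x) : ∀ᶠ δ : ℝ in 𝓝[>] 0, ∀ x ∈ K, δ * g x ≤ f x := by
  obtain ⟨m, hm, hmf⟩ := hK.exists_forall_le' hf hpos
  obtain ⟨B, hB⟩ := (hK.image_of_continuousOn hg).bddAbove
  have hlim : Tendsto (fun δ : ℝ ↦ δ * B) (𝓝[>] 0) (𝓝 (0 * B)) :=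
    Continuous.continuousWithinAt (by fun_prop)
  filter_upwards [hlim.eventually_lt_const (by simpa using hm), self_mem_nhdsWithin]
    with δ hδ (hδpos : 0 < δ) x hx
  calc δ * g x ≤ δ * B := by gcongr; exact hB (mem_image_of_mem g hx)
    _ ≤ m := hδ.le
    _ ≤ f x := hmf x hx

theorem HessianComparison.exists_eventually_add_mul_le (hk : 1 ≤ k) (hkn : k ≤ n)
    (h : HessianComparison k u v (ball y r))
    (hu : ContinuousOn u (closedBall y r)) (hv : ContinuousOn v (closedBall y r))
    (hr : r ≠ 0) (hlt : ∀ x ∈ closedBall y r, x ≠ p → u x < v x) (huv : u p ≤ v p)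
    (hb : ContDiff ℝ 2 b) (hb0 : ∀ x ∈ sphere y r, b x = 0)
    (hdec : ∀ᶠ q : Euc n × ℝ in 𝓝[ball y r] p ×ˢ 𝓝 0, 0 < q.2 →
      charpolySigma k (hessian v q.1 - q.2 • hessian b q.1) < charpolySigma k (hessian v q.1)) :
    ∃ δ > 0, ∀ᶠ x in 𝓝[closedBall y r] p, u x + δ * b x ≤ v x := by
  obtain ⟨P, hP, Q, hQ, hPQ⟩ := eventually_prod_iff.1 hdec
  obtain ⟨ρ, hρ, hPρ⟩ := Metric.mem_nhdsWithin_iff.1 hP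
  have hS : ∀ᶠ δ : ℝ in 𝓝[>] 0, ∀ x ∈ closedBall y r ∩ sphere p ρ, δ * b x ≤ v x - u x :=
    eventually_forall_mul_le ((isCompact_closedBall y r).inter_right isClosed_sphere)
      ((hv.sub hu).mono inter_subset_left) hb.continuous.continuousOn
      fun x hx ↦ sub_pos.2 (hlt x hx.1 (ne_of_mem_sphere hx.2 hρ.ne'))
  obtain ⟨δ, hSδ, hQδ, hδ⟩ :=
    (hS.and ((hQ.filter_mono nhdsWithin_le_nhds).and self_mem_nhdsWithin)).exists
  have hle : ∀ x ∈ closure (ball p ρ ∩ ball y r), (u + δ • b - v) x ≤ 0 := by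
    refine le_on_closure_of_forall_not_isLocalMax (isOpen_ball.inter isOpen_ball)
      (isBounded_ball.subset inter_subset_left) ?_ (fun x hx ↦ ?_) fun x hx ↦ ?_
    · exact ((hu.add (hb.continuous.continuousOn.const_smul δ)).sub hv).mono
        ((closure_mono inter_subset_right).trans closure_ball_subset_closedBall)
    · exact h.not_isLocalMax_add_smul_sub hk hkn hx.2 hb.contDiffAt (hPQ (hPρ hx) hQδ hδ)
    · simp only [Pi.sub_apply, Pi.add_apply, Pi.smul_apply, smul_eq_mul]
      have hxfr := frontier_inter_subset _ _ hx
      rw [frontier_ball p hρ.ne', frontier_ball y hr, closure_ball p hρ.ne', closure_ball y hr]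
        at hxfr
      rcases hxfr with ⟨hxρ, hxr⟩ | ⟨-, hxr⟩
      · linarith [hSδ x ⟨hxr, hxρ⟩]
      · have hux : u x ≤ v x := by
          rcases eq_or_ne x p with rfl | hne
          exacts [huv, (hlt x (sphere_subset_closedBall hxr) hne).le]
        simpa [hb0 x hxr] using hux
  refine ⟨δ, hδ, ?_⟩
  filter_upwards [inter_mem_nhdsWithin (closedBall y r) (ball_mem_nhds p hρ)] with x hx
  rw [← closure_ball y hr] at hx
  have := hle x (isOpen_ball.inter_closure hx.symm)
  simp only [Pi.sub_apply, Pi.add_apply, Pi.smul_apply, smul_eq_mul] at this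
  linarith

theorem hasFDerivWithinAt_apply_sub_nonpos {E : Type*} [NormedAddCommGroup E] [NormedSpace ℝ E]
    {K : Set E} (hK : Convex ℝ K) {f : E → ℝ} {f' : E →L[ℝ] ℝ} {p y : E} (hp : p ∈ K) (hy : y ∈ K)
    (hf : HasFDerivWithinAt f f' K p) (hmax : IsLocalMaxOn f K p) : f' (y - p) ≤ 0 :=
  hmax.hasFDerivWithinAt_nonpos hf
    (mem_posTangentConeAt_of_segment_subset (hK.segment_subset hp (by simpa using hy)))

theorem HessianComparison.hasFDerivWithinAt_apply_lt (hk : 1 ≤ k) (hkn : k ≤ n)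
    (h : HessianComparison k u v (ball y r))
    (hu : ContinuousOn u (closedBall y r)) (hv : ContinuousOn v (closedBall y r))
    (hr : 0 < r) (hp : p ∈ sphere y r) (hlt : ∀ x ∈ closedBall y r, x ≠ p → u x < v x)
    (huv : u p = v p) {A : Matrix (Fin n) (Fin n) ℝ} (hA : InGardingCone k A)
    (hvA : Tendsto (hessian v) (𝓝[ball y r] p) (𝓝 A)) {u' v' : Euc n →L[ℝ] ℝ}
    (hu' : HasFDerivWithinAt u u' (closedBall y r) p)
    (hv' : HasFDerivWithinAt v v' (closedBall y r) p) : u' (y - p) < v' (y - p) := by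
  obtain ⟨b, hb, hb0, hb', hdec⟩ := exists_contDiff_barrier hk hkn hA hr hp
  have hlim : Tendsto (fun q : Euc n × ℝ ↦ ((hessian v q.1, q.1), q.2))
      (𝓝[ball y r] p ×ˢ 𝓝 0) (𝓝 ((A, p), 0)) := by
    rw [nhds_prod_eq, nhds_prod_eq]
    exact ((hvA.prodMk (tendsto_id.mono_left nhdsWithin_le_nhds)).comp tendsto_fst).prodMk
      tendsto_snd
  obtain ⟨δ, hδ, hle⟩ :=
    h.exists_eventually_add_mul_le hk hkn hu hv hr.ne' hlt huv.le hb hb0 (hlim.eventually hdec)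
  have hmax : IsLocalMaxOn (u + δ • b - v) (closedBall y r) p := by
    filter_upwards [hle] with x hx
    simp only [Pi.sub_apply, Pi.add_apply, Pi.smul_apply, smul_eq_mul, hb0 p hp, huv]
    linarith
  have hb'' := ((hb.differentiable (by norm_num)) p).hasFDerivAt.hasFDerivWithinAt
    (s := closedBall y r)
  have hnonpos := hasFDerivWithinAt_apply_sub_nonpos (convex_closedBall y r)
    (sphere_subset_closedBall hp) (mem_closedBall_self hr.le)
    ((hu'.add (hb''.const_smul δ)).sub hv') hmax
  simp only [sub_apply, add_apply, smul_apply, smul_eq_mul] at hnonpos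
  nlinarith [mul_pos hδ hb']

end HopfLemma

section TouchingBalls

variable {E : Type*} [NormedAddCommGroup E]

theorem eventually_closedBall_add_smul_subset [NormedSpace ℝ E] {p y : E} {U : Set E}
    (hU : U ∈ 𝓝 p) : ∀ᶠ t : ℝ in 𝓝[>] 0,
      closedBall (p + t • (y - p)) (t * dist p y) ⊆ U ∩ closedBall y (dist p y) := by
  obtain ⟨ρ, hρ, hρU⟩ := Metric.mem_nhds_iff.1 hU
  have hlim : Tendsto (fun t : ℝ ↦ 2 * t * dist p y) (𝓝[>] 0) (𝓝 (2 * 0 * dist p y)) :=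
    Continuous.continuousWithinAt (by fun_prop)
  filter_upwards [hlim.eventually_lt_const (by simpa using hρ), Ioo_mem_nhdsGT one_pos]
    with t htρ ⟨ht₀, ht₁⟩
  have hcentre : dist (p + t • (y - p)) p = t * dist p y := by
    rw [dist_self_add_left, norm_smul, Real.norm_of_nonneg ht₀.le, ← dist_eq_norm, dist_comm y]
  have hcentre' : dist (p + t • (y - p)) y = (1 - t) * dist p y := by
    rw [dist_eq_norm, show p + t • (y - p) - y = (1 - t) • (p - y) by module, norm_smul,
      Real.norm_of_nonneg (by linarith), ← dist_eq_norm]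
  refine subset_inter ((closedBall_subset_ball' ?_).trans hρU) (closedBall_subset_closedBall' ?_)
  · rw [hcentre]; linarith
  · rw [hcentre']; linarith

theorem exists_closedBall_diff_singleton_subset_compl [NormedSpace ℝ E]
    [StrictConvexSpace ℝ E] [ProperSpace E]
    {Ω Z : Set E} (hΩo : IsOpen Ω) (hΩ : IsPreconnected Ω) (hZ : IsClosed Z)
    (hZΩ : (Ω ∩ Z).Nonempty) (hne : (Ω ∩ Zᶜ).Nonempty) :
    ∃ z ∈ Ω ∩ Z, ∃ y, y ≠ z ∧ closedBall y (dist z y) \ {z} ⊆ Zᶜ := by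
  obtain ⟨a, haΩ, haZ, haW⟩ : ∃ a ∈ Ω, a ∈ Z ∧ a ∈ closure Zᶜ := by
    by_contra! h
    obtain ⟨b, hbΩ, hbZ⟩ := hZΩ
    exact hΩ.subset_of_closure_inter_subset hZ.isOpen_compl hne
      (fun a ha ↦ fun haZ ↦ h a ha.2 haZ ha.1) hbΩ hbZ
  obtain ⟨η, hη, hηΩ⟩ := Metric.isOpen_iff.1 hΩo a haΩ
  obtain ⟨c, hcZ, hac⟩ := Metric.mem_closure_iff.1 haW (η / 2) (half_pos hη)
  obtain ⟨z, hzZ, hz⟩ := hZ.exists_infDist_eq_dist ⟨a, haZ⟩ c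
  have hmin : ∀ x ∈ Z, dist c z ≤ dist c x := fun x hx ↦ hz ▸ infDist_le_dist_of_mem hx
  have hzΩ : z ∈ Ω := hηΩ <| by
    have hca := hmin a haZ
    have := dist_triangle z c a
    rw [dist_comm z c] at this
    rw [dist_comm a c] at hac
    rw [mem_ball]
    linarith
  have hcz : c ≠ z := fun h ↦ hcZ (h ▸ hzZ)
  refine ⟨z, ⟨hzΩ, hzZ⟩, midpoint ℝ c z, by simpa using hcz, fun x hx hxZ ↦ hx.2 ?_⟩
  -- The ball with diameter `[c, z]` meets the complement of `ball c (dist c z)` only at `z`.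
  have hleft : dist c (midpoint ℝ c z) = dist c z / 2 := by
    rw [dist_left_midpoint, Real.norm_two]; ring
  have hxm : dist (midpoint ℝ c z) x ≤ dist c z / 2 := by
    have := hx.1
    rwa [mem_closedBall, dist_right_midpoint, Real.norm_two, inv_mul_eq_div, dist_comm] at this
  have htri := dist_triangle c (midpoint ℝ c z) x
  have hcx : dist c x = dist c z := le_antisymm (by linarith) (hmin x hxZ)
  have hmid : midpoint ℝ c z = midpoint ℝ c x :=
    eq_midpoint_of_dist_eq_half (by linarith) (by linarith)
  rw [midpoint_eq_midpoint_iff_vsub_eq_vsub, vsub_self, vsub_eq_sub, eq_comm, sub_eq_zero] at hmid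
  exact hmid

end TouchingBalls

section StrongComparison

variable {n k : ℕ} {u v : Euc n → ℝ} {p y : Euc n} {Ω D : Set (Euc n)}

theorem HessianComparison.hasFDerivWithinAt_apply_lt_of_eventually (hk : 1 ≤ k) (hkn : k ≤ n)
    (h : HessianComparison k u v D) (hy : y ≠ p)
    (hlt : ∀ᶠ x in 𝓝[closedBall y (dist p y) \ {p}] p, x ∈ D ∧ u x < v x) (huv : u p = v p)
    {A : Matrix (Fin n) (Fin n) ℝ} (hA : InGardingCone k A)
    (hvA : Tendsto (hessian v) (𝓝[D] p) (𝓝 A)) {u' v' : Euc n →L[ℝ] ℝ}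
    (hu' : HasFDerivWithinAt u u' (insert p D) p) (hv' : HasFDerivWithinAt v v' (insert p D) p) :
    u' (y - p) < v' (y - p) := by
  obtain ⟨U, hU, hUD⟩ := mem_nhdsWithin_iff_exists_mem_nhds_inter.1 hlt
  obtain ⟨t, ht, ht₀ : 0 < t⟩ :=
    ((eventually_closedBall_add_smul_subset (y := y) hU).and self_mem_nhdsWithin).exists
  set B := closedBall (p + t • (y - p)) (t * dist p y)
  have hB {x : Euc n} (hx : x ∈ B) (hxp : x ≠ p) : x ∈ D ∧ u x < v x :=
    hUD ⟨(ht hx).1, (ht hx).2, hxp⟩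
  have hBD : B ⊆ insert p D := fun x hx ↦ or_iff_not_imp_left.2 fun hxp ↦ (hB hx hxp).1
  have hp : p ∈ sphere (p + t • (y - p)) (t * dist p y) := by
    rw [mem_sphere, dist_self_add_right, norm_smul, Real.norm_of_nonneg ht₀.le, ← dist_eq_norm,
      dist_comm]
  have hr : 0 < t * dist p y := mul_pos ht₀ (dist_pos.2 hy.symm)
  have hball : ball (p + t • (y - p)) (t * dist p y) ⊆ D := fun x hx ↦
    (hB (ball_subset_closedBall hx) (by rintro rfl; exact hp.not_lt hx)).1
  have hcont {w : Euc n → ℝ} {w' : Euc n →L[ℝ] ℝ} (hw : ∀ x ∈ D, ContDiffAt ℝ 2 w x)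
      (hw' : HasFDerivWithinAt w w' (insert p D) p) : ContinuousOn w B := by
    intro x hx
    rcases hBD hx with rfl | hxD
    exacts [hw'.continuousWithinAt.mono hBD, (hw x hxD).continuousAt.continuousWithinAt]
  have hlt' := (h.mono hball).hasFDerivWithinAt_apply_lt hk hkn (hcont h.contDiffAt_left hu')
    (hcont h.contDiffAt_right hv') hr hp (fun x hx hxp ↦ (hB hx hxp).2) huv hA
    (hvA.mono_left (nhdsWithin_mono p hball)) (hu'.mono hBD) (hv'.mono hBD)
  rw [add_sub_cancel_left, map_smul, map_smul] at hlt'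
  exact lt_of_smul_lt_smul_left hlt' ht₀.le

theorem HessianComparison.lt_of_le (hk : 1 ≤ k) (hkn : k ≤ n) (h : HessianComparison k u v D)
    (hDo : IsOpen D) (hΩo : IsOpen Ω) (hΩ : IsPreconnected Ω) (hD : D ⊆ Ω)
    (hle : ∀ x ∈ D, u x ≤ v x) (hcontact : Ω ∩ closure {x ∈ D | u x = v x} ⊆ D)
    (hne : ∃ x ∈ Ω, x ∈ D → u x < v x) : ∀ x ∈ D, u x < v x := by
  have hZ {x : Euc n} (hx : x ∈ Ω ∩ closure {x ∈ D | u x = v x}) : x ∈ D ∧ u x = v x := by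
    refine ⟨hcontact hx, of_not_not fun hne ↦ ?_⟩
    have hlt := (hle x (hcontact hx)).lt_of_ne hne
    obtain ⟨w, hw, hwlt⟩ := ((mem_closure_iff_frequently.1 hx.2).and_eventually
      ((h.contDiffAt_left x (hcontact hx)).continuousAt.eventually_lt
        (h.contDiffAt_right x (hcontact hx)).continuousAt hlt)).exists
    exact hwlt.ne hw.2
  by_contra! hcon
  obtain ⟨a, haD, ha⟩ := hcon
  obtain ⟨b, hbΩ, hb⟩ := hne
  obtain ⟨z, hz, y, hyz, hball⟩ := exists_closedBall_diff_singleton_subset_compl hΩo hΩ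
    (isClosed_closure (s := {x ∈ D | u x = v x}))
    ⟨a, hD haD, subset_closure ⟨haD, (hle a haD).antisymm ha⟩⟩
    ⟨b, hbΩ, fun hbZ ↦ (hb (hZ ⟨hbΩ, hbZ⟩).1).ne (hZ ⟨hbΩ, hbZ⟩).2⟩
  obtain ⟨hzD, huvz⟩ := hZ hz
  have hu := h.contDiffAt_left z hzD
  have hv := h.contDiffAt_right z hzD
  have hmax : IsLocalMax (u - v) z := by
    filter_upwards [hDo.mem_nhds hzD] with x hx
    simpa [huvz] using hle x hx
  have hlt : ∀ᶠ x in 𝓝[closedBall y (dist z y) \ {z}] z, x ∈ D ∧ u x < v x := by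
    filter_upwards [self_mem_nhdsWithin, mem_nhdsWithin_of_mem_nhds (hDo.mem_nhds hzD)]
      with x hx hxD
    exact ⟨hxD, (hle x hxD).lt_of_ne fun heq ↦ hball hx (subset_closure ⟨hxD, heq⟩)⟩
  have hu' := (hu.differentiableAt (by norm_num)).hasFDerivAt
  have hv' := (hv.differentiableAt (by norm_num)).hasFDerivAt
  have hopf := h.hasFDerivWithinAt_apply_lt_of_eventually hk hkn hyz hlt huvz
    ((h.inGardingCone z hzD).of_posSemidef_sub (isHermitian_hessian hv)
      (posSemidef_hessian_sub_hessian hu hv hmax))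
    ((continuousAt_hessian hv).tendsto.mono_left nhdsWithin_le_nhds)
    hu'.hasFDerivWithinAt hv'.hasFDerivWithinAt
  rw [sub_eq_zero.1 (hmax.hasFDerivAt_eq_zero (hu'.sub hv'))] at hopf
  exact lt_irrefl _ hopf

end StrongComparison

section BoundaryHessian

theorem exists_tendsto_iteratedFDeriv_nhdsWithin_interior {E F : Type*} [NormedAddCommGroup E]
    [NormedSpace ℝ E] [NormedAddCommGroup F] [NormedSpace ℝ F] {f : E → F} {s : Set E} {p : E}
    {m : ℕ} (hf : ContDiffWithinAt ℝ m f s p) :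
    ∃ L, Tendsto (iteratedFDeriv ℝ m f) (𝓝[interior s] p) (𝓝 L) := by
  obtain ⟨U, hU, P, hP⟩ := contDiffWithinAt_nat.1 hf
  have hpU : p ∈ U := mem_of_mem_nhdsWithin (mem_insert p s) hU
  have hcont : Tendsto (fun x ↦ P x m) (𝓝[U] p) (𝓝 (P p m)) := hP.cont m le_rfl p hpU
  refine ⟨P p m, Tendsto.congr' ?_ (hcont.mono_left (nhdsWithin_le_of_mem
    (nhdsWithin_mono p (interior_subset.trans (subset_insert p s)) hU)))⟩
  have hnhds : ∀ᶠ x in 𝓝[interior s] p, U ∈ 𝓝 x := by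
    filter_upwards [nhdsWithin_mono p (interior_subset.trans (subset_insert p s))
      (eventually_eventually_nhdsWithin.2 hU), self_mem_nhdsWithin] with x hx hxs
    exact nhdsWithin_eq_nhds.2 (mem_of_superset (mem_interior_iff_mem_nhds.1 hxs)
      (subset_insert p s)) ▸ hx
  filter_upwards [hnhds] with x hx
  have hxU := mem_interior_iff_mem_nhds.2 hx
  rw [(hP.mono interior_subset).eq_iteratedFDerivWithin_of_uniqueDiffOn le_rfl
    isOpen_interior.uniqueDiffOn hxU, iteratedFDerivWithin_of_isOpen m isOpen_interior hxU]

theorem exists_tendsto_hessian_nhdsWithin {n : ℕ} {u : Euc n → ℝ} {Ω : Set (Euc n)} {p : Euc n}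
    (hΩo : IsOpen Ω) (hu : ContDiffWithinAt ℝ 2 u (closure Ω) p) :
    ∃ A, Tendsto (hessian u) (𝓝[Ω] p) (𝓝 A) := by
  obtain ⟨L, hL⟩ := exists_tendsto_iteratedFDeriv_nhdsWithin_interior (m := 2) hu
  refine ⟨fun i j ↦ L ![EuclideanSpace.single i 1, EuclideanSpace.single j 1],
    tendsto_pi_nhds.2 fun i ↦ tendsto_pi_nhds.2 fun j ↦ ?_⟩
  exact ((continuous_eval_const _).tendsto L).comp
    (hL.mono_left (nhdsWithin_mono p (hΩo.subset_interior_iff.2 subset_closure)))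

end BoundaryHessian

section SolutionsOfKHessianEquation

variable {n k : ℕ} {u v : Euc n → ℝ} {p : Euc n} {D D' : Set (Euc n)}

/-- `u` is a `C²`, strictly `k`-convex solution of `σ_k(D²u) = 1` in `D`. It is meant for open `D`,
where it frees `IsSol` and `IsSol22` of their derivatives within a set. -/
structure IsKHessianSolution {n : ℕ} (k : ℕ) (u : Euc n → ℝ) (D : Set (Euc n)) : Prop where
  contDiffAt : ∀ x ∈ D, ContDiffAt ℝ 2 u x
  inGardingCone : ∀ x ∈ D, InGardingCone k (hessian u x)
  sigmaMat_eq_one : ∀ x ∈ D, sigmaMat k (hessian u x) = 1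

theorem isKHessianSolution_of_contDiffOn_closure (hDo : IsOpen D)
    (hu : ContDiffOn ℝ 2 u (closure D))
    (hcone : ∀ x ∈ D, InGardingCone k (hessianWithin u (closure D) x) ∧
      sigmaMat k (hessianWithin u (closure D) x) = 1) : IsKHessianSolution k u D := by
  have hnhds {x : Euc n} (hx : x ∈ D) : closure D ∈ 𝓝 x :=
    mem_of_superset (hDo.mem_nhds hx) subset_closure
  refine ⟨fun x hx ↦ hu.contDiffAt (hnhds hx), fun x hx ↦ ?_, fun x hx ↦ ?_⟩
  · simpa only [hessianWithin_eq_hessian (hnhds hx)] using (hcone x hx).1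
  · simpa only [hessianWithin_eq_hessian (hnhds hx)] using (hcone x hx).2

theorem IsKHessianSolution.mono (hu : IsKHessianSolution k u D) (hD : D' ⊆ D) :
    IsKHessianSolution k u D' :=
  ⟨fun x hx ↦ hu.1 x (hD hx), fun x hx ↦ hu.2 x (hD hx), fun x hx ↦ hu.3 x (hD hx)⟩

theorem IsKHessianSolution.hessianComparison (hu : IsKHessianSolution k u D)
    (hv : IsKHessianSolution k v D) : HessianComparison k u v D :=
  ⟨hu.contDiffAt, hv.contDiffAt, hu.inGardingCone, fun x hx ↦
    ((hv.sigmaMat_eq_one x hx).trans (hu.sigmaMat_eq_one x hx).symm).le⟩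

theorem IsKHessianSolution.hessianComparison_const_smul (hkn : k ≤ n)
    (hu : IsKHessianSolution k u D) (hv : IsKHessianSolution k v D) {c : ℝ} (hc : 1 ≤ c) :
    HessianComparison k (c • u) v D := by
  have hc₀ : 0 < c := one_pos.trans_le hc
  refine ⟨fun x hx ↦ (hu.contDiffAt x hx).const_smul c, hv.contDiffAt, fun x hx ↦ ?_,
    fun x hx ↦ ?_⟩ <;> rw [hessian_const_smul c (hu.contDiffAt x hx)]
  · exact (hu.inGardingCone x hx).smul hkn hc₀
  · rw [sigmaMat_smul hkn hc₀.ne' (hu.inGardingCone x hx).isHermitian, hu.sigmaMat_eq_one x hx,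
      hv.sigmaMat_eq_one x hx, mul_one]
    exact one_le_pow₀ hc

theorem IsKHessianSolution.neg_of_frontier_nonpos (hk : 1 ≤ k) (hu : IsKHessianSolution k u D)
    (hDo : IsOpen D) (hDb : IsBounded D) (hcont : ContinuousOn u (closure D))
    (hfr : ∀ x ∈ frontier D, u x ≤ 0) : ∀ x ∈ D, u x < 0 :=
  lt_of_forall_not_isLocalMax hDo hDb hcont (fun x hx ↦
    not_isLocalMax_of_inGardingCone_hessian hk (hu.contDiffAt x hx) (hu.inGardingCone x hx)) hfr

theorem IsKHessianSolution.inGardingCone_of_tendsto (hkn : k ≤ n) (hu : IsKHessianSolution k u D)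
    (hp : p ∈ closure D) {A : Matrix (Fin n) (Fin n) ℝ}
    (hA : Tendsto (hessian u) (𝓝[D] p) (𝓝 A)) : InGardingCone k A := by
  have := mem_closure_iff_nhdsWithin_neBot.1 hp
  exact _root_.inGardingCone_of_tendsto hkn hA
    (eventually_mem_nhdsWithin.mono hu.inGardingCone) one_pos
    (eventually_mem_nhdsWithin.mono fun x hx ↦ (hu.sigmaMat_eq_one x hx).ge)

end SolutionsOfKHessianEquation

section RingDomains

variable {n : ℕ} {Ω : Set (Euc n)} {x₀ p : Euc n} {ε : ℝ}

theorem isOpen_diff_closedBall (hΩo : IsOpen Ω) (x₀ : Euc n) (ε : ℝ) :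
    IsOpen (Ω \ closedBall x₀ ε) :=
  hΩo.sdiff isClosed_closedBall

theorem ringSet_subset_closure : ringSet Ω x₀ ε ⊆ closure Ω :=
  closure_mono sdiff_subset

theorem frontier_diff_closedBall_subset (Ω : Set (Euc n)) (x₀ : Euc n) (ε : ℝ) :
    frontier (Ω \ closedBall x₀ ε) ⊆ frontier Ω ∪ sphere x₀ ε := by
  have hfr : frontier (closedBall x₀ ε)ᶜ ⊆ sphere x₀ ε := by
    rw [frontier_compl]
    exact frontier_closedBall_subset_sphere
  rw [sdiff_eq]
  exact (frontier_inter_subset _ _).trans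
    (union_subset_union inter_subset_left (inter_subset_right.trans hfr))

theorem mem_diff_closedBall_or_mem_sphere (hΩo : IsOpen Ω) {x : Euc n} (hx : x ∈ Ω)
    (hxr : x ∈ ringSet Ω x₀ ε) : x ∈ Ω \ closedBall x₀ ε ∨ x ∈ sphere x₀ ε := by
  refine or_iff_not_imp_left.2 fun hxD ↦ ?_
  have hfr : x ∈ frontier (Ω \ closedBall x₀ ε) :=
    (isOpen_diff_closedBall hΩo x₀ ε).frontier_eq ▸ ⟨hxr, hxD⟩
  refine (frontier_diff_closedBall_subset Ω x₀ ε hfr).resolve_left fun h ↦ ?_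
  exact (hΩo.frontier_eq ▸ h).2 hx

theorem ringSet_mem_nhdsWithin_closure (hp : p ∉ closedBall x₀ ε) :
    ringSet Ω x₀ ε ∈ 𝓝[closure Ω] p := by
  have hU : (closedBall x₀ ε)ᶜ ∈ 𝓝 p := isClosed_closedBall.isOpen_compl.mem_nhds hp
  filter_upwards [inter_mem_nhdsWithin (closure Ω) hU] with x hx
  have := isClosed_closedBall.isOpen_compl.inter_closure hx.symm
  rwa [inter_comm, ← sdiff_eq] at this

end RingDomains

section ComparisonWithTheHolelessSolution

variable {n k : ℕ} {u ψ : Euc n → ℝ} {Ω : Set (Euc n)} {x₀ p ν : Euc n} {ε M C r : ℝ}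

theorem IsSol.isKHessianSolution (hu : IsSol k Ω x₀ ε M u) (hΩo : IsOpen Ω) :
    IsKHessianSolution k u (Ω \ closedBall x₀ ε) :=
  isKHessianSolution_of_contDiffOn_closure (isOpen_diff_closedBall hΩo x₀ ε) hu.1 hu.2.1

theorem IsSol.le (hk : 1 ≤ k) (hkn : k ≤ n) (hu : IsSol k Ω x₀ ε M u) (hΩo : IsOpen Ω)
    (hΩb : IsBounded Ω) (hψ : IsKHessianSolution k ψ Ω) (hψc : ContinuousOn ψ (closure Ω))
    (hψ₀ : ∀ x ∈ frontier Ω, ψ x = 0) (hM : ∀ x ∈ sphere x₀ ε, -M ≤ ψ x) :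
    ∀ x ∈ ringSet Ω x₀ ε, u x ≤ ψ x := by
  refine ((hu.isKHessianSolution hΩo).hessianComparison (hψ.mono sdiff_subset)).le_on_closure hk hkn
    (isOpen_diff_closedBall hΩo x₀ ε) (hΩb.subset sdiff_subset) hu.1.continuousOn
    (hψc.mono ringSet_subset_closure) fun x hx ↦ ?_
  rcases frontier_diff_closedBall_subset Ω x₀ ε hx with hx | hx
  · rw [hu.2.2.1 x hx, hψ₀ x hx]
  · exact (hu.2.2.2 x hx).trans_le (hM x hx)

theorem IsSol.const_smul_le (hk : 1 ≤ k) (hkn : k ≤ n) (hu : IsSol k Ω x₀ ε M u) (hΩo : IsOpen Ω)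
    (hΩb : IsBounded Ω) (hψ : IsKHessianSolution k ψ Ω) (hψc : ContinuousOn ψ (closure Ω))
    (hψ₀ : ∀ x ∈ frontier Ω, ψ x = 0) (hC : 1 ≤ C) (hCψ : ∀ x ∈ sphere x₀ ε, C * ψ x ≤ -M) :
    ∀ x ∈ ringSet Ω x₀ ε, (C • ψ) x ≤ u x := by
  refine ((hψ.mono sdiff_subset).hessianComparison_const_smul hkn (hu.isKHessianSolution hΩo)
    hC).le_on_closure hk hkn (isOpen_diff_closedBall hΩo x₀ ε) (hΩb.subset sdiff_subset)
    ((hψc.mono ringSet_subset_closure).const_smul C) hu.1.continuousOn fun x hx ↦ ?_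
  rcases frontier_diff_closedBall_subset Ω x₀ ε hx with hx | hx
  · simp [hu.2.2.1 x hx, hψ₀ x hx]
  · exact (hCψ x hx).trans_eq (hu.2.2.2 x hx).symm

theorem IsSol.lt (hk : 1 ≤ k) (hkn : k ≤ n) (hu : IsSol k Ω x₀ ε M u) (hΩo : IsOpen Ω)
    (hΩ : IsPreconnected Ω) (hΩb : IsBounded Ω) (hψ : IsKHessianSolution k ψ Ω)
    (hψc : ContinuousOn ψ (closure Ω)) (hψ₀ : ∀ x ∈ frontier Ω, ψ x = 0) (hε : 0 ≤ ε)
    (hx₀ : x₀ ∈ Ω) (hM : ∀ x ∈ sphere x₀ ε, -M < ψ x) :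
    ∀ x ∈ Ω \ closedBall x₀ ε, u x < ψ x := by
  have hle := hu.le hk hkn hΩo hΩb hψ hψc hψ₀ fun x hx ↦ (hM x hx).le
  refine ((hu.isKHessianSolution hΩo).hessianComparison (hψ.mono sdiff_subset)).lt_of_le hk hkn
    (isOpen_diff_closedBall hΩo x₀ ε) hΩo hΩ sdiff_subset (fun x hx ↦ hle x (subset_closure hx)) ?_
    ⟨x₀, hx₀, fun hx ↦ absurd (mem_closedBall_self hε) hx.2⟩
  rintro x ⟨hxΩ, hx⟩
  have hclosed : IsClosed {x ∈ ringSet Ω x₀ ε | ψ x ≤ u x} :=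
    isClosed_closure.isClosed_le (hψc.mono ringSet_subset_closure) hu.1.continuousOn
  obtain ⟨hxr, hψu⟩ := hclosed.closure_subset_iff.2
    (fun y hy ↦ (⟨subset_closure hy.1, hy.2.ge⟩ : y ∈ ringSet Ω x₀ ε ∧ ψ y ≤ u y)) hx
  refine (mem_diff_closedBall_or_mem_sphere hΩo hxΩ hxr).resolve_right fun hxs ↦ ?_
  exact ((hM x hxs).trans_le hψu).ne' (hu.2.2.2 x hxs)

theorem IsSol.fderivWithin_lt (hk : 1 ≤ k) (hkn : k ≤ n) (hu : IsSol k Ω x₀ ε M u)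
    (hΩo : IsOpen Ω) (hψ : IsKHessianSolution k ψ Ω) (hψc : ContDiffOn ℝ 2 ψ (closure Ω))
    (hψ₀ : ∀ x ∈ frontier Ω, ψ x = 0) (hpball : p ∉ closedBall x₀ ε)
    (hlt : ∀ x ∈ Ω \ closedBall x₀ ε, u x < ψ x) (hp : p ∈ frontier Ω) (hν : ‖ν‖ = 1) (hr : 0 < r)
    (hint : closedBall (p + r • ν) r \ {p} ⊆ Ω) :
    fderivWithin ℝ u (ringSet Ω x₀ ε) p ν < fderivWithin ℝ ψ (closure Ω) p ν := by
  have hpΩ := frontier_subset_closure hp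
  have hpring : p ∈ ringSet Ω x₀ ε :=
    mem_of_mem_nhdsWithin hpΩ (ringSet_mem_nhdsWithin_closure hpball)
  obtain ⟨A, hA⟩ := exists_tendsto_hessian_nhdsWithin hΩo (hψc p hpΩ)
  have hdist : dist p (p + r • ν) = r := by
    rw [dist_self_add_right, norm_smul, hν, Real.norm_of_nonneg hr.le, mul_one]
  have hev : ∀ᶠ x in 𝓝[closedBall (p + r • ν) (dist p (p + r • ν)) \ {p}] p,
      x ∈ Ω \ closedBall x₀ ε ∧ u x < ψ x := by
    rw [hdist]
    filter_upwards [self_mem_nhdsWithin,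
      mem_nhdsWithin_of_mem_nhds (isClosed_closedBall.isOpen_compl.mem_nhds hpball)] with x hx hxb
    exact ⟨⟨hint hx, hxb⟩, hlt x ⟨hint hx, hxb⟩⟩
  have hDring : insert p (Ω \ closedBall x₀ ε) ⊆ ringSet Ω x₀ ε :=
    insert_subset hpring subset_closure
  have hopf := ((hu.isKHessianSolution hΩo).hessianComparison
    (hψ.mono sdiff_subset)).hasFDerivWithinAt_apply_lt_of_eventually hk hkn
    (dist_pos.1 (hdist.symm ▸ hr)).symm hev (by rw [hu.2.2.1 p hp, hψ₀ p hp])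
    (hψ.inGardingCone_of_tendsto hkn hpΩ hA) (hA.mono_left (nhdsWithin_mono p sdiff_subset))
    (((hu.1.differentiableOn (by norm_num)) p hpring).hasFDerivWithinAt.mono hDring)
    (((hψc.differentiableOn (by norm_num)) p hpΩ).hasFDerivWithinAt.mono
      (hDring.trans ringSet_subset_closure))
  rw [add_sub_cancel_left, map_smul, map_smul] at hopf
  exact lt_of_smul_lt_smul_left hopf hr.le

theorem IsSol.const_mul_fderivWithin_le (hu : IsSol k Ω x₀ ε M u)
    (hψc : ContDiffOn ℝ 2 ψ (closure Ω)) (hψ₀ : ∀ x ∈ frontier Ω, ψ x = 0)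
    (hle : ∀ x ∈ ringSet Ω x₀ ε, (C • ψ) x ≤ u x) (hpball : p ∉ closedBall x₀ ε)
    (hp : p ∈ frontier Ω) (hν : ‖ν‖ = 1) (hr : 0 < r)
    (hint : closedBall (p + r • ν) r \ {p} ⊆ Ω) :
    C * fderivWithin ℝ ψ (closure Ω) p ν ≤ fderivWithin ℝ u (ringSet Ω x₀ ε) p ν := by
  have hpΩ := frontier_subset_closure hp
  have hring := ringSet_mem_nhdsWithin_closure (Ω := Ω) hpball
  have hsub : closedBall (p + r • ν) r ⊆ closure Ω := fun x hx ↦ by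
    rcases eq_or_ne x p with rfl | hxp
    exacts [hpΩ, subset_closure (hint ⟨hx, hxp⟩)]
  have hψ' := ((hψc.differentiableOn (by norm_num)) p hpΩ).hasFDerivWithinAt
  have hu' := ((hu.1.differentiableOn (by norm_num)) p
    (mem_of_mem_nhdsWithin hpΩ hring)).hasFDerivWithinAt.mono_of_mem_nhdsWithin hring
  have hmax : IsLocalMaxOn (C • ψ - u) (closure Ω) p := by
    filter_upwards [hring] with x hx
    simpa [hu.2.2.1 p hp, hψ₀ p hp] using hle x hx
  have hnonpos := hasFDerivWithinAt_apply_sub_nonpos (convex_closedBall (p + r • ν) r)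
    (by simp [norm_smul, hν, abs_of_pos hr]) (mem_closedBall_self hr.le)
    (((hψ'.const_smul C).sub hu').mono hsub) (hmax.on_subset hsub)
  rw [add_sub_cancel_left, map_smul, smul_eq_mul] at hnonpos
  have := nonpos_of_mul_nonpos_right hnonpos hr
  simpa only [sub_apply, smul_apply, smul_eq_mul, sub_nonpos] using this

theorem exists_one_lt_forall_const_mul_le {X : Type*} [TopologicalSpace X] {K : Set X}
    (hK : IsCompact K) {f : X → ℝ} (hf : ContinuousOn f K) (hneg : ∀ x ∈ K, f x < 0) (m : ℝ) :
    ∃ C : ℝ, 1 < C ∧ ∀ x ∈ K, C * f x ≤ m := by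
  obtain ⟨b, hb, hbf⟩ := hK.exists_forall_le' hf.neg fun x hx ↦ neg_pos.2 (hneg x hx)
  obtain ⟨C, hC, hCb⟩ := ((eventually_gt_atTop 1).and (eventually_ge_atTop (-m / b))).exists
  refine ⟨C, hC, fun x hx ↦ ?_⟩
  rw [div_le_iff₀ hb] at hCb
  calc C * f x ≤ C * -b := by gcongr; exact le_neg_of_le_neg (hbf x hx)
    _ ≤ m := by linarith

end ComparisonWithTheHolelessSolution

section InteriorBalls

variable {E : Type*} [NormedAddCommGroup E]

theorem eventually_lt_of_hasFDerivAt_apply_neg [NormedSpace ℝ E] {f : E → ℝ} {f' : E →L[ℝ] ℝ}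
    {p w : E} (hf : HasFDerivAt f f' p) (hw : f' w < 0) :
    ∀ᶠ t : ℝ in 𝓝[>] 0, f (p + t • w) < f p := by
  have hslope := hf.hasLineDerivAt w |>.tendsto_slope_zero_right
  filter_upwards [hslope.eventually_lt_const hw, self_mem_nhdsWithin] with t ht (ht₀ : 0 < t)
  rw [smul_eq_mul] at ht
  simpa using neg_of_mul_neg_right ht (inv_nonneg.2 ht₀.le)

theorem exists_eventually_norm_sub_sub_fderiv_le {F : Type*} [NormedSpace ℝ E]
    [NormedAddCommGroup F] [NormedSpace ℝ F] {f : E → F} {p : E} (hf : ContDiffAt ℝ 2 f p) :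
    ∃ K : ℝ, ∀ᶠ x in 𝓝 p, ‖f x - f p - fderiv ℝ f p (x - p)‖ ≤ K * ‖x - p‖ ^ 2 := by
  obtain ⟨K, t, ht, hK⟩ := (hf.fderiv_right (m := 1) (by norm_num)).exists_lipschitzOnWith
  obtain ⟨η, hη, hηt⟩ := Metric.mem_nhds_iff.1
    (inter_mem ht (eventually_differentiableAt_of_contDiffAt_two hf))
  refine ⟨K, eventually_of_mem (ball_mem_nhds p hη) fun x hx ↦ ?_⟩
  have hsub : closedBall p ‖x - p‖ ⊆ ball p η :=
    closedBall_subset_ball (by rwa [← dist_eq_norm])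
  calc ‖f x - f p - fderiv ℝ f p (x - p)‖ ≤ K * ‖x - p‖ * ‖x - p‖ := by
        refine (convex_closedBall p ‖x - p‖).norm_image_sub_le_of_norm_hasFDerivWithin_le'
          (fun z hz ↦ (hηt (hsub hz)).2.hasFDerivAt.hasFDerivWithinAt) (fun z hz ↦ ?_)
          (mem_closedBall_self (norm_nonneg _)) (by simp [dist_eq_norm])
        rw [← dist_eq_norm]
        refine (hK.dist_le_mul z (hηt (hsub hz)).1 p (mem_of_mem_nhds ht)).trans ?_
        gcongr
        exact hz
    _ = K * ‖x - p‖ ^ 2 := by ring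

variable [InnerProductSpace ℝ E]

theorem eq_neg_norm_smul_of_forall_inner_nonneg {G ν : E} (hν : ‖ν‖ = 1)
    (h : ∀ w, ⟪G, w⟫ < 0 → 0 ≤ ⟪w, ν⟫) : G = -(‖G‖ • ν) := by
  rcases eq_or_ne G 0 with rfl | hG
  · simp
  have hGpos := norm_pos_iff.2 hG
  have hinner : ⟪G, ν⟫ ≤ -‖G‖ := by
    by_contra! hlt
    have hneg : ⟪G, -(‖G‖ • ν) - G⟫ < 0 := by
      rw [inner_sub_right, inner_neg_right, real_inner_smul_right, real_inner_self_eq_norm_sq]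
      nlinarith
    have := h _ hneg
    rw [inner_sub_left, inner_neg_left, real_inner_smul_left, real_inner_self_eq_norm_sq, hν]
      at this
    linarith
  have hnorm : ‖G + ‖G‖ • ν‖ ^ 2 ≤ 0 := by
    rw [norm_add_sq_real, real_inner_smul_right, norm_smul, hν, norm_norm]
    nlinarith
  exact eq_neg_of_add_eq_zero_left (norm_eq_zero.1 (pow_eq_zero_iff two_ne_zero |>.1
    (hnorm.antisymm (sq_nonneg _))))

theorem norm_sub_sq_le_of_mem_closedBall_add_smul {p ν x : E} {r : ℝ} (hν : ‖ν‖ = 1)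
    (hx : x ∈ closedBall (p + r • ν) r) : ‖x - p‖ ^ 2 ≤ 2 * r * ⟪ν, x - p⟫ := by
  have hsq : ‖x - p - r • ν‖ ^ 2 ≤ r ^ 2 := by
    gcongr
    rwa [sub_sub, ← dist_eq_norm]
  rw [norm_sub_sq_real, norm_smul, hν, mul_one, Real.norm_eq_abs, sq_abs, real_inner_smul_right,
    real_inner_comm] at hsq
  linarith

theorem exists_closedBall_diff_singleton_subset_of_fderiv {ρ : E → ℝ} {p ν : E} {a : ℝ}
    (hρ : ContDiffAt ℝ 2 ρ p) (hp : ρ p ≤ 0) (hν : ‖ν‖ = 1) (ha : 0 < a)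
    (hderiv : ∀ w, fderiv ℝ ρ p w = -(a * ⟪ν, w⟫)) :
    ∃ r > 0, closedBall (p + r • ν) r \ {p} ⊆ {x | ρ x < 0} := by
  obtain ⟨K, hK⟩ := exists_eventually_norm_sub_sub_fderiv_le hρ
  obtain ⟨η, hη, hηK⟩ := Metric.eventually_nhds_iff_ball.1 hK
  have hr₁ : Tendsto (fun r : ℝ ↦ 2 * r) (𝓝[>] 0) (𝓝 (2 * 0)) :=
    Continuous.continuousWithinAt (by fun_prop)
  have hr₂ : Tendsto (fun r : ℝ ↦ 2 * r * |K|) (𝓝[>] 0) (𝓝 (2 * 0 * |K|)) :=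
    Continuous.continuousWithinAt (by fun_prop)
  obtain ⟨r, hrη, hrK, hr : 0 < r⟩ := ((hr₁.eventually_lt_const (by simpa using hη)).and
    ((hr₂.eventually_lt_const (by simpa using ha)).and self_mem_nhdsWithin)).exists
  refine ⟨r, hr, fun x ⟨hx, hxp⟩ ↦ ?_⟩
  have hxη : x ∈ ball p η :=
    closedBall_subset_ball' (by simpa [norm_smul, hν, abs_of_pos hr, two_mul] using hrη) hx
  have hsq := norm_sub_sq_le_of_mem_closedBall_add_smul hν hx
  have hpos : 0 < ‖x - p‖ ^ 2 := pow_pos (norm_pos_iff.2 (sub_ne_zero.2 hxp)) 2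
  have hinner : 0 < ⟪ν, x - p⟫ := pos_of_mul_pos_right (hpos.trans_le hsq) (by positivity)
  have htaylor := (le_abs_self _).trans (hηK x hxη)
  rw [hderiv] at htaylor
  calc ρ x ≤ |K| * ‖x - p‖ ^ 2 - a * ⟪ν, x - p⟫ := by nlinarith [le_abs_self K]
    _ ≤ |K| * (2 * r * ⟪ν, x - p⟫) - a * ⟪ν, x - p⟫ := by gcongr
    _ = (2 * r * |K| - a) * ⟪ν, x - p⟫ := by ring
    _ < 0 := mul_neg_of_neg_of_pos (sub_neg.2 hrK) hinner

theorem HasSmoothBoundary.exists_closedBall_diff_singleton_subset {n : ℕ} {Ω : Set (Euc n)}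
    (hΩ : HasSmoothBoundary Ω) {p ν : Euc n} (hp : p ∈ frontier Ω) (hν : ‖ν‖ = 1)
    (hin : ∀ y ∈ closure Ω, 0 ≤ ⟪y - p, ν⟫) :
    ∃ r > 0, closedBall (p + r • ν) r \ {p} ⊆ Ω := by
  obtain ⟨ρ, hρ, rfl, hρ'⟩ := hΩ
  have hρp : ρ p ≤ 0 := closure_lt_subset_le hρ.continuous continuous_const
    (frontier_subset_closure hp)
  have hderiv := (hρ.differentiable (by simp) p).hasFDerivAt
  set G : Euc n := (InnerProductSpace.toDual ℝ (Euc n)).symm (fderiv ℝ ρ p)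
  have hG (w : Euc n) : ⟪G, w⟫ = fderiv ℝ ρ p w := InnerProductSpace.toDual_symm_apply
  have hGν : G = -(‖G‖ • ν) := eq_neg_norm_smul_of_forall_inner_nonneg hν fun w hw ↦ by
    obtain ⟨t, ht, ht₀ : 0 < t⟩ := ((eventually_lt_of_hasFDerivAt_apply_neg hderiv
      (hG w ▸ hw)).and self_mem_nhdsWithin).exists
    have := hin _ (subset_closure (ht.trans_le hρp))
    rw [add_sub_cancel_left, real_inner_smul_left] at this
    exact nonneg_of_mul_nonneg_right this ht₀
  have hG₀ : G ≠ 0 := by simpa [G] using hρ' p hp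
  refine exists_closedBall_diff_singleton_subset_of_fderiv
    (contDiff_infty.1 hρ 2).contDiffAt hρp hν (norm_pos_iff.2 hG₀) fun w ↦ ?_
  rw [← hG w, ← real_inner_smul_left, ← inner_neg_left, ← hGν]

end InteriorBalls

theorem statement4_general {n k : ℕ} (hk : 1 ≤ k) (hkn : k ≤ n) {Ω : Set (Euc n)}
    (hΩo : IsOpen Ω) (hΩ : IsPreconnected Ω) (hΩb : IsBounded Ω) {x₀ : Euc n} {ε₀ : ℝ}
    (hball : closedBall x₀ ε₀ ⊆ Ω) {ψ : Euc n → ℝ} (hψc : ContDiffOn ℝ 2 ψ (closure Ω))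
    (hψ : ∀ x ∈ Ω, InGardingCone k (hessianWithin ψ (closure Ω) x) ∧
      sigmaMat k (hessianWithin ψ (closure Ω) x) = 1)
    (hψ₀ : ∀ x ∈ frontier Ω, ψ x = 0) {M : ℝ}
    (hM : ∀ x ∈ closedBall x₀ ε₀, -M < ψ x) :
    ∃ C : ℝ, 1 < C ∧ ∀ ε ∈ Ioo (0 : ℝ) ε₀, ∀ u : Euc n → ℝ, IsSol k Ω x₀ ε M u →
      ∀ p ∈ frontier Ω, ∀ ν : Euc n, ‖ν‖ = 1 →
        (∃ r > 0, closedBall (p + r • ν) r \ {p} ⊆ Ω) →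
        C * fderivWithin ℝ ψ (closure Ω) p ν < fderivWithin ℝ u (ringSet Ω x₀ ε) p ν ∧
          fderivWithin ℝ u (ringSet Ω x₀ ε) p ν < fderivWithin ℝ ψ (closure Ω) p ν := by
  have hψsol := isKHessianSolution_of_contDiffOn_closure hΩo hψc hψ
  have hψneg := hψsol.neg_of_frontier_nonpos hk hΩo hΩb hψc.continuousOn fun x hx ↦ (hψ₀ x hx).le
  obtain ⟨C, hC, hCψ⟩ := exists_one_lt_forall_const_mul_le (isCompact_closedBall x₀ ε₀)
    (hψc.continuousOn.mono (hball.trans subset_closure)) (fun x hx ↦ hψneg x (hball hx)) (-M)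
  refine ⟨C + 1, by linarith, fun ε hε u hu p hp ν hν ⟨r, hr, hint⟩ ↦ ?_⟩
  have hεε₀ := closedBall_subset_closedBall (x := x₀) hε.2.le
  have hpball : p ∉ closedBall x₀ ε := fun h ↦ (hΩo.frontier_eq ▸ hp).2 (hball (hεε₀ h))
  have hlt := hu.lt hk hkn hΩo hΩ hΩb hψsol hψc.continuousOn hψ₀ hε.1.le
    (hball (mem_closedBall_self (hε.1.trans hε.2).le))
    fun x hx ↦ hM x (hεε₀ (sphere_subset_closedBall hx))
  have hle := hu.const_smul_le hk hkn hΩo hΩb hψsol hψc.continuousOn hψ₀ hC.le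
    fun x hx ↦ hCψ x (hεε₀ (sphere_subset_closedBall hx))
  have hupper := hu.fderivWithin_lt hk hkn hΩo hψsol hψc hψ₀ hpball hlt hp hν hr hint
  have hlower := hu.const_mul_fderivWithin_le hψc hψ₀ hle hpball hp hν hr hint
  exact ⟨by nlinarith, hupper⟩

/-- `C¹` bounds on the outer boundary `∂Ω₁`. -/
theorem statement4 {n k : ℕ} (hk : 1 ≤ k) (hkn : k ≤ n)
    (Ω₁ : Set (Euc n)) (hΩo : IsOpen Ω₁) (hΩconv : Convex ℝ Ω₁)
    (hΩb : IsBounded Ω₁) (hΩs : HasSmoothBoundary Ω₁)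
    (ε₀ : ℝ) (hε₀ : 0 < ε₀) (hball : closedBall (0 : Euc n) ε₀ ⊆ Ω₁)
    (ψ : Euc n → ℝ) (hψ : IsSol22 k Ω₁ ψ)
    (M₁ : ℝ) (hM₁ : 0 < M₁) (hM₁ψ : ∀ x ∈ closure Ω₁, -ψ x < M₁)
    (hM₁sub : ∀ ε ∈ Ioo (0:ℝ) ε₀, ∀ x ∈ frontier Ω₁, underSol k (0 : Euc n) ε M₁ x ≤ 0)
    (M : ℝ) (hM : M₁ < M)
 :
    ∃ C : ℝ, 1 < C ∧ ∀ ε ∈ Ioo (0:ℝ) ε₀, ∀ u : Euc n → ℝ,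
      IsSol k Ω₁ (0 : Euc n) ε M u → ∀ p ∈ frontier Ω₁, ∀ ν : Euc n,
        ‖ν‖ = 1 → (∀ y ∈ closure Ω₁, 0 ≤ ⟪y - p, ν⟫) →
        C * fderivWithin ℝ ψ (closure Ω₁) p ν <
            fderivWithin ℝ u (ringSet Ω₁ (0 : Euc n) ε) p ν ∧
          fderivWithin ℝ u (ringSet Ω₁ (0 : Euc n) ε) p ν <
            fderivWithin ℝ ψ (closure Ω₁) p ν := by
  obtain ⟨C, hC, hbounds⟩ := statement4_general hk hkn hΩo hΩconv.isPreconnected hΩb hball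
    (contDiffOn_infty.1 hψ.1 2) hψ.2.1 hψ.2.2 fun x hx ↦
      neg_lt.1 ((hM₁ψ x (subset_closure (hball hx))).trans hM)
  exact ⟨C, hC, fun ε hε u hu p hp ν hν hin ↦ hbounds ε hε u hu p hp ν hν
    (hΩs.exists_closedBall_diff_singleton_subset hp hν hin)⟩
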